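/- arXiv:2007.02814 — 3 statements merged into one kernel-verified Lean document; each statement's English description precedes it below -/
import Mathlib

section
/- Let Θ be an n×m real matrix and let σ, ρ be weights as in the context. Suppose δ ≥ 1 is a real number with ω_{ρ,σ}(ᵀΘ) ≥ δ, i.e. for every δ' < δ the system |y|_ρ ≤ t, |ᵀΘy − x|_σ ≤ t^{−δ'} admits a nonzero solution (x,y) ∈ ℤ^m ⊕ ℤ^n for arbitrarily large t. Then ω_{σ,ρ}(Θ) ≥ ((σ_m^{−1} − 1) + ρ_n^{−1}δ)/(σ_m^{−1} + (ρ_n^{−1} − 1)δ). (This is the weighted generalisation of Dyson's transference theorem.) -/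
open Filter

noncomputable section

/-- The weighted norm `|x|_w = max_j |x_j|^(1/w_j)`. -/
def wnorm {k : ℕ} (w : Fin k → ℝ) (x : Fin k → ℝ) : ℝ := ⨆ j, |x j| ^ ((1 : ℝ) / w j)

/-- The weighted Diophantine exponent `ω_{σ,ρ}(Θ)`: the supremum (in `[−∞,+∞]`) of real `γ`
such that the system `|x|_σ ≤ t`, `|Θx − y|_ρ ≤ t^(−γ)` admits a nonzero integer solution
for arbitrarily large `t`. -/
def omegaWeighted {m n : ℕ} (Θ : Matrix (Fin n) (Fin m) ℝ)
    (σ : Fin m → ℝ) (ρ : Fin n → ℝ) : EReal :=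
  sSup (Real.toEReal '' {γ : ℝ | ∀ T : ℝ, ∃ t > T,
    ∃ (x : Fin m → ℤ) (y : Fin n → ℤ), (x, y) ≠ 0 ∧
      wnorm σ (fun j => (x j : ℝ)) ≤ t ∧
      wnorm ρ (fun i => Θ.mulVec (fun j => (x j : ℝ)) i - (y i : ℝ)) ≤ t ^ (-γ)})

theorem minkowski_forms {ι : Type} [Fintype ι] [DecidableEq ι] [Nonempty ι]
    (A : Matrix ι ι ℝ) (hA : A.det ≠ 0) (c : ι → ℝ) (hc : ∀ i, 0 < c i)
    (h : |A.det| ≤ ∏ i, c i) :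
    ∃ z : ι → ℤ, z ≠ 0 ∧ ∀ i, |A.mulVec (fun j => (z j : ℝ)) i| ≤ c i := by
  let e := Matrix.toLinearEquiv (Pi.basisFun ℝ ι) A (isUnit_iff_ne_zero.mpr hA)
  let b : Module.Basis ι ℝ (ι → ℝ) := (Pi.basisFun ℝ ι).map e
  have hb : ∀ i, b i = fun k => A k i := by
    intro i
    ext k
    simp [b, e, Matrix.toLinearEquiv, Matrix.toLin_eq_toLin']
  let s : Set (ι → ℝ) := Set.Icc (-c) c
  have hdet : (Matrix.of b).det = A.det := by
    rw [← Matrix.det_transpose A]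
    congr 1
    ext i k
    simp [hb]
  have fund := ZSpan.isAddFundamentalDomain' b MeasureTheory.volume
  have : DiscreteTopology (Submodule.span ℤ (Set.range b)).toAddSubgroup :=
    inferInstanceAs (DiscreteTopology (Submodule.span ℤ (Set.range b)))
  have : Countable (Submodule.span ℤ (Set.range b)).toAddSubgroup :=
    inferInstanceAs (Countable (Submodule.span ℤ (Set.range b)))
  have key : MeasureTheory.volume (ZSpan.fundamentalDomain b) * 2 ^ Module.finrank ℝ (ι → ℝ)
      ≤ MeasureTheory.volume s := by
    rw [ZSpan.volume_fundamentalDomain, hdet, Real.volume_Icc_pi, Module.finrank_fintype_fun_eq_card]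
    rw [← ENNReal.ofReal_prod_of_nonneg (fun i _ => by simpa using by linarith [hc i])]
    rw [show (2 : ENNReal) ^ Fintype.card ι = ENNReal.ofReal (2 ^ Fintype.card ι) by
      rw [ENNReal.ofReal_pow (by norm_num)]; norm_num]
    rw [← ENNReal.ofReal_mul (abs_nonneg _)]
    apply ENNReal.ofReal_le_ofReal
    have : ∏ i, (c i - (-c) i) = (∏ i, c i) * 2 ^ Fintype.card ι := by
      rw [← Finset.card_univ, ← Finset.prod_const, ← Finset.prod_mul_distrib]
      refine Finset.prod_congr rfl fun i _ => ?_
      simp; ring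
    rw [this]
    gcongr
  obtain ⟨x, hx0, hxs⟩ :=
    MeasureTheory.exists_ne_zero_mem_lattice_of_measure_mul_two_pow_le_measure fund
      (s := s) (fun x hx => ⟨neg_le_neg hx.2, by simpa using neg_le_neg hx.1⟩) (convex_Icc _ _)
      isCompact_Icc key
  have hx := x.2
  rw [Submodule.mem_toAddSubgroup, b.mem_span_iff_repr_mem ℤ] at hx
  choose z hz using hx
  have hxe : (x : ι → ℝ) = A.mulVec (fun j => (z j : ℝ)) := by
    rw [← b.sum_repr (x : ι → ℝ)]
    ext k
    simp only [← hz, hb, Matrix.mulVec, dotProduct]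
    simp [mul_comm]
  refine ⟨z, ?_, fun i => ?_⟩
  · rintro rfl
    apply hx0
    ext1
    rw [hxe]
    ext k
    simp [Matrix.mulVec, dotProduct]
  · rw [← hxe]
    exact abs_le.mpr ⟨hxs.1 i, hxs.2 i⟩

theorem transfer_forms {ι : Type} [Fintype ι] [DecidableEq ι] (hcard : 2 ≤ Fintype.card ι)
    (A : Matrix ι ι ℝ) (hA : |A.det| = 1) (c : ι → ℝ) (hc : c ≠ 0)
    (hint : ∀ z : ι → ℤ, ∃ N : ℤ, ∑ k, c k * A.mulVec (fun j => (z j : ℝ)) k = N)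
    (B : ι → ℝ) (hB : ∀ i, 0 < B i) (h : ∀ k, |c k| * B k ≤ ∏ i, B i) :
    ∃ z : ι → ℤ, z ≠ 0 ∧
      ∀ i, |A.mulVec (fun j => (z j : ℝ)) i| ≤ (2 * Fintype.card ι : ℝ) * B i := by
  have : Nonempty ι := Fintype.card_pos_iff.mp (by omega)
  obtain ⟨k0, -, hk0⟩ := Finset.exists_max_image Finset.univ (fun k => |c k| * B k)
    Finset.univ_nonempty
  have hck0 : 0 < |c k0| := by
    by_contra hcon
    have h0 : |c k0| = 0 := le_antisymm (not_lt.mp hcon) (abs_nonneg _)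
    apply hc
    ext k
    have := hk0 k (Finset.mem_univ _)
    rw [h0, zero_mul] at this
    have h1 : |c k| ≤ 0 := by
      by_contra h2
      have := mul_pos (not_le.mp h2) (hB k)
      linarith
    simpa using h1
  let A' := A.updateRow k0 (∑ k, c k • A k)
  have hdet : |A'.det| = |c k0| := by
    rw [Matrix.det_updateRow_sum, smul_eq_mul, abs_mul, hA, mul_one]
  let c' : ι → ℝ := Function.update (fun k => 2 * B k) k0 (1 / 2)
  have hc' : ∀ i, 0 < c' i := by
    intro i
    by_cases hi : i = k0
    · subst hi; simp [c']
    · simp [c', hi, hB]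
  have hprod : |A'.det| ≤ ∏ i, c' i := by
    rw [hdet, Finset.prod_update_of_mem (Finset.mem_univ _), Finset.prod_mul_distrib,
      Finset.prod_const]
    have hc1 : (Finset.univ \ {k0} : Finset ι).card = Fintype.card ι - 1 := by
      rw [Finset.card_sdiff_of_subset (by simp)]; simp
    have hp := Finset.mul_prod_erase Finset.univ B (Finset.mem_univ k0)
    rw [Finset.erase_eq] at hp
    have hk := h k0
    rw [← hp, mul_comm] at hk
    have hk2 := le_of_mul_le_mul_left hk (hB k0)
    rw [hc1]
    have h2 : (2 : ℝ) ≤ 2 ^ (Fintype.card ι - 1) := by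
      calc (2 : ℝ) = 2 ^ 1 := by norm_num
        _ ≤ _ := pow_le_pow_right₀ (by norm_num) (by omega)
    have : (0:ℝ) < ∏ x ∈ Finset.univ \ {k0}, B x := Finset.prod_pos fun i _ => hB i
    nlinarith
  obtain ⟨z, hz0, hz⟩ := minkowski_forms A' (by rw [← abs_pos, hdet]; exact hck0) c' hc' hprod
  set v := A.mulVec (fun j => (z j : ℝ)) with hv
  have hvk : ∀ k, k ≠ k0 → |v k| ≤ 2 * B k := by
    intro k hk
    have := hz k
    simpa [A', c', hk, Matrix.mulVec, hv] using this
  have hL : ∑ k, c k * v k = 0 := by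
    obtain ⟨N, hN⟩ := hint z
    have h1 := hz k0
    have h2 : A'.mulVec (fun j => (z j : ℝ)) k0 = ∑ k, c k * v k := by
      simp only [A', Matrix.mulVec, Matrix.updateRow_self, hv]
      rw [sum_dotProduct]
      simp
    rw [h2, hN] at h1
    simp only [c', Function.update_self] at h1
    have h3 : |(N : ℝ)| < 1 := by linarith
    have h4 : |N| < 1 := by exact_mod_cast h3
    rw [hN, Int.abs_lt_one_iff.mp h4]; simp
  refine ⟨z, hz0, fun i => ?_⟩
  have hcr : (2 : ℝ) ≤ Fintype.card ι := by exact_mod_cast hcard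
  by_cases hi : i = k0
  · subst hi
    rw [← Finset.add_sum_erase _ _ (Finset.mem_univ i)] at hL
    have h1 : |c i| * |v i| ≤ ∑ k ∈ Finset.univ.erase i, 2 * (|c i| * B i) := by
      rw [← abs_mul, eq_neg_of_add_eq_zero_left hL, abs_neg]
      refine (Finset.abs_sum_le_sum_abs _ _).trans (Finset.sum_le_sum fun k hk => ?_)
      rw [abs_mul]
      have h5 := hvk k (Finset.ne_of_mem_erase hk)
      have h6 := hk0 k (Finset.mem_univ _)
      have h7 := mul_le_mul_of_nonneg_left h5 (abs_nonneg (c k))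
      linarith
    rw [Finset.sum_const, nsmul_eq_mul] at h1
    have h8 : ((Finset.univ.erase i).card : ℝ) ≤ Fintype.card ι := by
      exact_mod_cast Finset.card_le_univ _
    have h9 := mul_le_mul_of_nonneg_right h8 (by have := hB i; positivity : 0 ≤ 2 * (|c i| * B i))
    refine le_of_mul_le_mul_left ?_ hck0
    linarith
  · have := hvk i hi
    have := hB i
    nlinarith

theorem wnorm_le_of {k : ℕ} (w : Fin (k + 1) → ℝ) (hw : ∀ j, 0 < w j) (x : Fin (k + 1) → ℝ) (t : ℝ)
    (ht : 0 ≤ t) (h : ∀ j, |x j| ≤ t ^ w j) : wnorm w x ≤ t := by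
  refine ciSup_le fun j => ?_
  calc |x j| ^ ((1 : ℝ) / w j) ≤ (t ^ w j) ^ ((1 : ℝ) / w j) :=
        Real.rpow_le_rpow (abs_nonneg _) (h j) (by have := hw j; positivity)
    _ = t := by
      rw [← Real.rpow_mul ht, mul_one_div_cancel (hw j).ne', Real.rpow_one]

theorem le_of_wnorm_le {k : ℕ} (w : Fin (k + 1) → ℝ) (hw : ∀ j, 0 < w j) (x : Fin (k + 1) → ℝ)
    (t : ℝ) (h : wnorm w x ≤ t) (j : Fin (k + 1)) : |x j| ≤ t ^ w j := by
  have h1 : |x j| ^ ((1 : ℝ) / w j) ≤ t :=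
    (le_ciSup (f := fun j => |x j| ^ ((1 : ℝ) / w j)) (Set.finite_range _).bddAbove j).trans h
  calc |x j| = (|x j| ^ ((1 : ℝ) / w j)) ^ w j := by
        rw [← Real.rpow_mul (abs_nonneg _), one_div_mul_cancel (hw j).ne', Real.rpow_one]
    _ ≤ t ^ w j := Real.rpow_le_rpow (by positivity) h1 (hw j).le

/-- The unimodular block matrix of the forms `x_j` and `(Θ x - y)_i`. -/
def blockForms {m n : ℕ} (Θ : Matrix (Fin n) (Fin m) ℝ) :
    Matrix (Fin m ⊕ Fin n) (Fin m ⊕ Fin n) ℝ := Matrix.fromBlocks 1 0 Θ (-1)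

theorem blockForms_det {m n : ℕ} (Θ : Matrix (Fin n) (Fin m) ℝ) : |(blockForms Θ).det| = 1 := by
  rw [blockForms, Matrix.det_fromBlocks_zero₁₂, Matrix.det_neg]
  simp

theorem blockForms_inl {m n : ℕ} (Θ : Matrix (Fin n) (Fin m) ℝ) (z : Fin m ⊕ Fin n → ℝ) (j : Fin m) :
    (blockForms Θ).mulVec z (Sum.inl j) = z (Sum.inl j) := by
  simp [blockForms, Matrix.fromBlocks_mulVec]

theorem blockForms_inr {m n : ℕ} (Θ : Matrix (Fin n) (Fin m) ℝ) (z : Fin m ⊕ Fin n → ℝ) (i : Fin n) :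
    (blockForms Θ).mulVec z (Sum.inr i) =
      Θ.mulVec (fun j => z (Sum.inl j)) i - z (Sum.inr i) := by
  simp only [blockForms, Matrix.fromBlocks_mulVec, Sum.elim_inr, Pi.add_apply, Matrix.neg_mulVec,
    Matrix.one_mulVec, Pi.neg_apply, Function.comp_apply, sub_eq_add_neg]
  rfl

theorem sum_split_ne_zero {m n : ℕ} (z : Fin m ⊕ Fin n → ℤ) (hz : z ≠ 0) :
    ((fun j => z (Sum.inl j), fun i => z (Sum.inr i)) : (Fin m → ℤ) × (Fin n → ℤ)) ≠ 0 := by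
  intro h
  apply hz
  ext k
  rcases k with j | i
  · exact congrFun (congrArg Prod.fst h) j
  · exact congrFun (congrArg Prod.snd h) i

theorem dirichlet_block {m n : ℕ} (Θ : Matrix (Fin (n + 1)) (Fin (m + 1)) ℝ)
    (X : Fin (m + 1) → ℝ) (Y : Fin (n + 1) → ℝ) (hX : ∀ j, 0 < X j) (hY : ∀ i, 0 < Y i)
    (h : 1 ≤ (∏ j, X j) * ∏ i, Y i) :
    ∃ (x : Fin (m + 1) → ℤ) (y : Fin (n + 1) → ℤ), (x, y) ≠ 0 ∧ (∀ j, |(x j : ℝ)| ≤ X j) ∧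
      ∀ i, |Θ.mulVec (fun j => (x j : ℝ)) i - (y i : ℝ)| ≤ Y i := by
  have hd := blockForms_det Θ
  obtain ⟨z, hz, hb⟩ := minkowski_forms (blockForms Θ)
    (by intro h0; rw [h0] at hd; simp at hd) (Sum.elim X Y)
    (by rintro (j | i); exacts [hX j, hY i]) (by rw [hd, Fintype.prod_sum_type]; simpa using h)
  refine ⟨fun j => z (Sum.inl j), fun i => z (Sum.inr i), sum_split_ne_zero z hz, fun j => ?_,
    fun i => ?_⟩
  · have := hb (Sum.inl j)
    rwa [blockForms_inl] at this
  · have := hb (Sum.inr i)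
    rwa [blockForms_inr] at this

theorem transfer_block {m n : ℕ} (Θ : Matrix (Fin (n + 1)) (Fin (m + 1)) ℝ)
    (a : Fin (m + 1) → ℤ) (b : Fin (n + 1) → ℤ) (hab : (a, b) ≠ 0)
    (X : Fin (m + 1) → ℝ) (Y : Fin (n + 1) → ℝ) (hX : ∀ j, 0 < X j) (hY : ∀ i, 0 < Y i)
    (h1 : ∀ i, |(b i : ℝ)| * Y i ≤ (∏ j, X j) * ∏ i, Y i)
    (h2 : ∀ j, |Θ.transpose.mulVec (fun i => (b i : ℝ)) j - (a j : ℝ)| * X j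
      ≤ (∏ j, X j) * ∏ i, Y i) :
    ∃ (x : Fin (m + 1) → ℤ) (y : Fin (n + 1) → ℤ), (x, y) ≠ 0 ∧
      (∀ j, |(x j : ℝ)| ≤ (2 * (m + n + 2)) * X j) ∧
      ∀ i, |Θ.mulVec (fun j => (x j : ℝ)) i - (y i : ℝ)| ≤ (2 * (m + n + 2)) * Y i := by
  have hd := blockForms_det Θ
  have hcard : Fintype.card (Fin (m + 1) ⊕ Fin (n + 1)) = m + n + 2 := by simp; ring
  let c : Fin (m + 1) ⊕ Fin (n + 1) → ℝ := Sum.elim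
    (fun j => - (Θ.transpose.mulVec (fun i => (b i : ℝ)) j - (a j : ℝ))) (fun i => (b i : ℝ))
  have hc : c ≠ 0 := by
    intro h0
    have hb0 : b = 0 := by
      ext i
      have : (b i : ℝ) = 0 := congrFun h0 (Sum.inr i)
      exact_mod_cast this
    apply hab
    have ha0 : a = 0 := by
      ext j
      have := congrFun h0 (Sum.inl j)
      have h3 : (a j : ℝ) = 0 := by
        simpa [c, hb0, Matrix.mulVec, dotProduct] using this
      exact_mod_cast h3
    rw [ha0, hb0]; rfl
  have hint : ∀ z : Fin (m + 1) ⊕ Fin (n + 1) → ℤ, ∃ N : ℤ,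
      ∑ k, c k * (blockForms Θ).mulVec (fun j => (z j : ℝ)) k = N := by
    intro z
    refine ⟨∑ j, a j * z (Sum.inl j) - ∑ i, b i * z (Sum.inr i), ?_⟩
    rw [Fintype.sum_sum_type]
    simp only [blockForms_inl, blockForms_inr, c, Sum.elim_inl, Sum.elim_inr]
    have hsw : ∑ j, Θ.transpose.mulVec (fun i => (b i : ℝ)) j * (z (Sum.inl j) : ℝ) =
        ∑ i, (b i : ℝ) * Θ.mulVec (fun j => (z (Sum.inl j) : ℝ)) i := by
      simp only [Matrix.mulVec, dotProduct, Matrix.transpose_apply, Finset.sum_mul, Finset.mul_sum]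
      rw [Finset.sum_comm]
      refine Finset.sum_congr rfl fun i _ => Finset.sum_congr rfl fun j _ => by ring
    simp only [neg_mul, sub_mul, mul_sub, Finset.sum_neg_distrib, Finset.sum_sub_distrib, hsw]
    push_cast
    ring
  obtain ⟨z, hz, hb⟩ := transfer_forms (by rw [hcard]; omega) (blockForms Θ) hd c hc hint
    (Sum.elim X Y) (by rintro (j | i); exacts [hX j, hY i]) (by
      rw [Fintype.prod_sum_type]
      rintro (j | i)
      · simpa only [c, Sum.elim_inl, Sum.elim_inr, abs_neg] using h2 j
      · simpa only [c, Sum.elim_inl, Sum.elim_inr, abs_neg] using h1 i)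
  rw [hcard] at hb
  push_cast at hb
  refine ⟨fun j => z (Sum.inl j), fun i => z (Sum.inr i), sum_split_ne_zero z hz, fun j => ?_,
    fun i => ?_⟩
  · have := hb (Sum.inl j)
    rwa [blockForms_inl] at this
  · have := hb (Sum.inr i)
    rwa [blockForms_inr] at this

theorem prod_rpow_weights {k : ℕ} (w : Fin k → ℝ) (hw : ∑ j, w j = 1) (t : ℝ) (ht : 0 < t)
    (a : ℝ) : ∏ j, t ^ (a * w j) = t ^ a := by
  rw [← Real.rpow_sum_of_pos ht, ← Finset.mul_sum, hw, mul_one]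

theorem dyson_aux {m n : ℕ} (Θ : Matrix (Fin (n + 1)) (Fin (m + 1)) ℝ)
    (σ : Fin (m + 1) → ℝ) (ρ : Fin (n + 1) → ℝ)
    (hσa : Antitone σ) (hρa : Antitone ρ)
    (hσp : ∀ j, 0 < σ j) (hρp : ∀ i, 0 < ρ i)
    (hσs : ∑ j, σ j = 1) (hρs : ∑ i, ρ i = 1)
    (M N : ℝ) (hM : M = (σ (Fin.last m))⁻¹) (hN : N = (ρ (Fin.last n))⁻¹)
    (hM1 : 1 ≤ M) (hN1 : 1 ≤ N)
    (δ : ℝ) (hδ : 1 ≤ δ)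
    (hdual : ∀ T : ℝ, ∃ t > T,
      ∃ (x : Fin (m + 1) → ℤ) (y : Fin (n + 1) → ℤ), (x, y) ≠ 0 ∧
        wnorm ρ (fun i => (y i : ℝ)) ≤ t ∧
        wnorm σ (fun j => Θ.transpose.mulVec (fun i => (y i : ℝ)) j - (x j : ℝ)) ≤ t ^ (-δ))
    (g : ℝ) (hg : g < (M - 1 + N * δ) / (M + (N - 1) * δ)) (T : ℝ) :
    ∃ t > T, ∃ (x : Fin (m + 1) → ℤ) (y : Fin (n + 1) → ℤ), (x, y) ≠ 0 ∧
      wnorm σ (fun j => (x j : ℝ)) ≤ t ∧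
      wnorm ρ (fun i => Θ.mulVec (fun j => (x j : ℝ)) i - (y i : ℝ)) ≤ t ^ (-g) := by
  set G := (M - 1 + N * δ) / (M + (N - 1) * δ) with hG
  have hden : 0 < M + (N - 1) * δ := by nlinarith
  have hMN : 0 < M + N - 1 := by linarith
  set a := (M + (N - 1) * δ) / (M + N - 1) with ha
  have ha0 : 0 < a := by positivity
  have hGa : G * a = (M - 1 + N * δ) / (M + N - 1) := by
    rw [hG, ha, div_mul_div_cancel₀ hden.ne']
  set e := (1 - δ) / (M + N - 1) with he
  have he0 : e ≤ 0 := div_nonpos_of_nonpos_of_nonneg (by linarith) hMN.le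
  have e1 : a - G * a = e := by rw [hGa, ha, he]; field_simp; ring
  have e2 : 1 - G * a = N * e := by rw [hGa, he]; field_simp; ring
  have e3 : a - δ = M * e := by rw [ha, he]; field_simp; ring
  set C : ℝ := 2 * (m + n + 2) with hC
  have hC1 : 1 ≤ C := by
    have : (0:ℝ) ≤ m := by positivity
    have : (0:ℝ) ≤ n := by positivity
    rw [hC]; linarith
  have hC0 : 0 < C := by linarith
  set K : ℝ := C ^ M with hK
  have hK0 : 0 < K := by positivity
  have hK1 : 1 ≤ K := Real.one_le_rpow hC1 (by linarith)
  have hσM : ∀ j, 1 ≤ σ j * M := by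
    intro j
    rw [hM]
    have := hσa (Fin.le_last j)
    rw [← div_eq_mul_inv, one_le_div (hσp _)]; exact this
  have hρN : ∀ i, 1 ≤ ρ i * N := by
    intro i
    rw [hN]
    have := hρa (Fin.le_last i)
    rw [← div_eq_mul_inv, one_le_div (hρp _)]; exact this
  have hev : ∀ᶠ t : ℝ in atTop, ∀ i, C * K ^ (g * ρ i) ≤ t ^ (a * (G - g) * ρ i) := by
    rw [eventually_all]
    intro i
    exact (tendsto_rpow_atTop (mul_pos (mul_pos ha0 (sub_pos.mpr hg)) (hρp i))).eventually_ge_atTop _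
  have hev2 : ∀ᶠ t : ℝ in atTop, T + 1 ≤ t ^ a :=
    (tendsto_rpow_atTop ha0).eventually_ge_atTop _
  obtain ⟨T1, hT1⟩ := eventually_atTop.mp (hev.and hev2)
  obtain ⟨t, htT, x, y, hxy, hy, hx⟩ := hdual (max T1 1)
  have ht1 : 1 < t := (le_max_right _ _).trans_lt htT
  have ht0 : 0 < t := by linarith
  obtain ⟨hA, hB⟩ := hT1 t ((le_max_left _ _).trans htT.le)
  have hyb := le_of_wnorm_le ρ hρp _ _ hy
  have hxb := le_of_wnorm_le σ hσp _ _ hx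
  have hprod : (∏ j, t ^ (a * σ j)) * ∏ i, t ^ (-(G * a) * ρ i) = t ^ e := by
    rw [prod_rpow_weights σ hσs t ht0, prod_rpow_weights ρ hρs t ht0, ← Real.rpow_add ht0, ← e1,
      sub_eq_add_neg]
  obtain ⟨x', y', hne, hx', hy'⟩ := transfer_block Θ x y hxy (fun j => t ^ (a * σ j))
    (fun i => t ^ (-(G * a) * ρ i)) (fun j => by positivity) (fun i => by positivity)
    (fun i => by
      rw [hprod]
      calc _ ≤ t ^ ρ i * t ^ (-(G * a) * ρ i) := by gcongr; exact hyb i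
        _ = t ^ (ρ i * N * e) := by
          rw [← Real.rpow_add ht0]; congr 1
          linear_combination ρ i * e2
        _ ≤ t ^ e := Real.rpow_le_rpow_of_exponent_le ht1.le (by nlinarith [hρN i]))
    (fun j => by
      rw [hprod]
      calc _ ≤ (t ^ (-δ)) ^ σ j * t ^ (a * σ j) := by gcongr; exact hxb j
        _ = t ^ (σ j * M * e) := by
          rw [← Real.rpow_mul ht0.le, ← Real.rpow_add ht0]; congr 1
          linear_combination σ j * e3
        _ ≤ t ^ e := Real.rpow_le_rpow_of_exponent_le ht1.le (by nlinarith [hσM j]))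
  have hs0 : 0 < t ^ a := by positivity
  refine ⟨K * t ^ a, ?_, x', y', hne, ?_, ?_⟩
  · have : t ^ a ≤ K * t ^ a := le_mul_of_one_le_left hs0.le hK1
    linarith
  · refine wnorm_le_of σ hσp _ _ (by positivity) fun j => (hx' j).trans ?_
    rw [Real.mul_rpow hK0.le hs0.le, ← Real.rpow_mul ht0.le]
    gcongr
    rw [hK, ← Real.rpow_mul hC0.le]
    calc 2 * ((m : ℝ) + n + 2) = C ^ (1 : ℝ) := by rw [Real.rpow_one]
      _ ≤ _ := Real.rpow_le_rpow_of_exponent_le hC1 (by rw [mul_comm]; exact hσM j)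
  · refine wnorm_le_of ρ hρp _ _ (by positivity) fun i => (hy' i).trans ?_
    rw [← Real.rpow_mul (by positivity), Real.mul_rpow hK0.le hs0.le, ← Real.rpow_mul ht0.le]
    have h1 := hA i
    have h2 : t ^ (a * (-g * ρ i)) = t ^ (a * (G - g) * ρ i) * t ^ (-(G * a) * ρ i) := by
      rw [← Real.rpow_add ht0]; congr 1; ring
    rw [h2, ← mul_assoc]
    refine mul_le_mul_of_nonneg_right ?_ (by positivity)
    have h3 : K ^ (-g * ρ i) * K ^ (g * ρ i) = 1 := by
      rw [← Real.rpow_add hK0, neg_mul, neg_add_cancel, Real.rpow_zero]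
    have h4 := mul_le_mul_of_nonneg_left h1 (by positivity : 0 ≤ K ^ (-g * ρ i))
    calc 2 * ((m : ℝ) + n + 2) = K ^ (-g * ρ i) * (C * K ^ (g * ρ i)) := by
          linear_combination (-C) * h3
      _ ≤ _ := h4

/-- The weighted version of Dyson's transference theorem. -/
theorem stmt0 {m n : ℕ} (Θ : Matrix (Fin (n + 1)) (Fin (m + 1)) ℝ)
    (σ : Fin (m + 1) → ℝ) (ρ : Fin (n + 1) → ℝ)
    (hσa : Antitone σ) (hρa : Antitone ρ)
    (hσp : ∀ j, 0 < σ j) (hρp : ∀ i, 0 < ρ i)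
    (hσs : ∑ j, σ j = 1) (hρs : ∑ i, ρ i = 1)
    (δ : ℝ) (hδ : 1 ≤ δ)
    (hdual : ∀ δ' < δ, ∀ T : ℝ, ∃ t > T,
      ∃ (x : Fin (m + 1) → ℤ) (y : Fin (n + 1) → ℤ), (x, y) ≠ 0 ∧
        wnorm ρ (fun i => (y i : ℝ)) ≤ t ∧
        wnorm σ (fun j => Θ.transpose.mulVec (fun i => (y i : ℝ)) j - (x j : ℝ)) ≤ t ^ (-δ')) :
    (((((σ (Fin.last m))⁻¹ - 1) + (ρ (Fin.last n))⁻¹ * δ) /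
        ((σ (Fin.last m))⁻¹ + ((ρ (Fin.last n))⁻¹ - 1) * δ) : ℝ) : EReal) ≤
      omegaWeighted Θ σ ρ := by
  set M := (σ (Fin.last m))⁻¹ with hM
  set N := (ρ (Fin.last n))⁻¹ with hN
  have hM1 : 1 ≤ M := by
    rw [hM]
    refine (one_le_inv₀ (hσp _)).mpr ?_
    rw [← hσs]
    exact Finset.single_le_sum (fun j _ => (hσp j).le) (Finset.mem_univ _)
  have hN1 : 1 ≤ N := by
    rw [hN]
    refine (one_le_inv₀ (hρp _)).mpr ?_
    rw [← hρs]
    exact Finset.single_le_sum (fun j _ => (hρp j).le) (Finset.mem_univ _)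
  rcases hδ.eq_or_lt with rfl | hδ1
  · have h1 : (M - 1 + N * 1) / (M + (N - 1) * 1) = 1 := by
      rw [div_eq_one_iff_eq (by linarith)]; ring
    rw [h1]
    refine le_sSup ⟨1, fun T => ?_, rfl⟩
    set t := max (T + 1) 1 with ht
    have ht0 : 0 < t := lt_of_lt_of_le one_pos (le_max_right _ _)
    have htT : T < t := lt_of_lt_of_le (by linarith) (le_max_left _ _)
    obtain ⟨x, y, hxy, hx, hy⟩ := dirichlet_block Θ (fun j => t ^ (1 * σ j))
      (fun i => t ^ (-1 * ρ i)) (fun j => by positivity) (fun i => by positivity) (by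
        rw [prod_rpow_weights σ hσs t ht0, prod_rpow_weights ρ hρs t ht0, ← Real.rpow_add ht0]
        norm_num)
    refine ⟨t, htT, x, y, hxy, wnorm_le_of σ hσp _ _ ht0.le fun j => ?_,
      wnorm_le_of ρ hρp _ _ (by positivity) fun i => ?_⟩
    · simpa using hx j
    · rw [← Real.rpow_mul ht0.le]
      exact hy i
  · refine le_of_forall_lt fun c hc => ?_
    obtain ⟨g, hcg, hg⟩ := EReal.lt_iff_exists_real_btwn.mp hc
    refine hcg.trans_le (le_sSup ⟨g, ?_, rfl⟩)
    have hg' : g < (M - 1 + N * δ) / (M + (N - 1) * δ) := by exact_mod_cast hg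
    have hden : M + (N - 1) * δ ≠ 0 := by nlinarith
    have hcont : ContinuousAt (fun d : ℝ => (M - 1 + N * d) / (M + (N - 1) * d)) δ :=
      ContinuousAt.div (by fun_prop) (by fun_prop) hden
    have hev := (hcont.eventually (lt_mem_nhds hg')).and (lt_mem_nhds hδ1)
    obtain ⟨d, ⟨hd1, hd2⟩, hd3⟩ := ((hev.filter_mono nhdsWithin_le_nhds).and
      (self_mem_nhdsWithin : Set.Iio δ ∈ nhdsWithin δ (Set.Iio δ))).exists
    exact dyson_aux Θ σ ρ hσa hρa hσp hρp hσs hρs M N hM hN hM1 hN1 d hd2.le (hdual d hd3) g hd1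
end
end

section
/- Let Λ be a unimodular lattice in ℝ^d with dual lattice Λ*. For every τ ∈ T and every k = 1,…,d one has −log d ≤ L_k(Λ,τ) + L_{d+1−k}(Λ*,−τ) ≤ log(d!). -/
open Filter

noncomputable section

/-- A unimodular lattice in `ℝ^d`: the set of integer linear combinations of a basis of `ℝ^d`
whose matrix has determinant `±1`. -/
def IsUnimodularLattice (d : ℕ) (Λ : Set (Fin d → ℝ)) : Prop :=
  ∃ B : Matrix (Fin d) (Fin d) ℝ, |B.det| = 1 ∧
    Λ = {v | ∃ x : Fin d → ℤ, v = B.mulVec fun i => (x i : ℝ)}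

/-- The dual lattice `Λ* = {w : ⟨w, z⟩ ∈ ℤ for all z ∈ Λ}`. -/
def dualLattice (d : ℕ) (Λ : Set (Fin d → ℝ)) : Set (Fin d → ℝ) :=
  {w | ∀ z ∈ Λ, ∃ c : ℤ, ∑ i, w i * z i = (c : ℝ)}

/-- The `k`-th successive minimum `λ_k(B_τ, Λ)` of the box
`B_τ = {z : |z_i| ≤ exp (τ i)}` with respect to the lattice `Λ`. -/
def succMin (d : ℕ) (Λ : Set (Fin d → ℝ)) (τ : Fin d → ℝ) (k : ℕ) : ℝ :=
  sInf {lam : ℝ | 0 < lam ∧ ∃ v : Fin k → (Fin d → ℝ),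
    (∀ l, v l ∈ Λ) ∧ LinearIndependent ℝ v ∧ ∀ l i, |v l i| ≤ lam * Real.exp (τ i)}

/-- `L_k(Λ, τ) = log λ_k(B_τ, Λ)`. -/
def Lk (d : ℕ) (Λ : Set (Fin d → ℝ)) (τ : Fin d → ℝ) (k : ℕ) : ℝ :=
  Real.log (succMin d Λ τ k)

/-- `S_k(Λ, τ) = L_1(Λ, τ) + ⋯ + L_k(Λ, τ)`. -/
def Sk (d : ℕ) (Λ : Set (Fin d → ℝ)) (τ : Fin d → ℝ) (k : ℕ) : ℝ :=
  ∑ j ∈ Finset.Icc 1 k, Lk d Λ τ j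


theorem aux_fact (d : ℕ) : (Real.sqrt d) ^ d ≤ (Nat.factorial d : ℝ) := by
  have h : d ^ d ≤ (Nat.factorial d) ^ 2 := by
    have h1 : Nat.factorial d = ∏ i ∈ Finset.range d, (i + 1) := (Finset.prod_range_add_one_eq_factorial d).symm
    have h2 : Nat.factorial d = ∏ i ∈ Finset.range d, (d - 1 - i + 1) := by
      rw [h1, ← Finset.prod_range_reflect]
    rw [sq]
    nth_rewrite 2 [h1]
    rw [h2, ← Finset.prod_mul_distrib]
    calc d ^ d = ∏ i ∈ Finset.range d, d := by simp
      _ ≤ _ := by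
        apply Finset.prod_le_prod' 
        intro i hi
        rw [Finset.mem_range] at hi
        obtain ⟨c, rfl⟩ : ∃ c, d = i + 1 + c := ⟨d - (i+1), by omega⟩
        have : i + 1 + c - 1 - i = c := by omega
        rw [this]; nlinarith [Nat.zero_le (c*i)]
  have h' : ((d : ℝ)) ^ d ≤ (Nat.factorial d : ℝ) ^ 2 := by exact_mod_cast h
  apply (sq_le_sq₀ (by positivity) (by positivity)).mp
  rw [← pow_mul, mul_comm, pow_mul, Real.sq_sqrt (by positivity)]
  exact h'

theorem aux_hadamard {d : ℕ} (W : Matrix (Fin d) (Fin d) ℝ) :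
    |W.det| ≤ ∏ i, ‖(WithLp.toLp 2 (W i) : EuclideanSpace ℝ (Fin d))‖ := by
  let b := EuclideanSpace.basisFun (Fin d) ℝ
  have : Fact (Module.finrank ℝ (EuclideanSpace ℝ (Fin d)) = d) := ⟨by simp⟩
  have h := (b.toBasis.orientation).abs_volumeForm_apply_le (fun i => (WithLp.toLp 2 (W i) : EuclideanSpace ℝ (Fin d)))
  rw [Orientation.volumeForm_robust' _ b, Module.Basis.det_apply] at h
  have e : b.toBasis.toMatrix (fun i => (WithLp.toLp 2 (W i) : EuclideanSpace ℝ (Fin d))) = W.transpose := by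
    ext i j
    simp [Module.Basis.toMatrix_apply, b]
  rwa [e, Matrix.det_transpose] at h

theorem aux_minkowski {d : ℕ} (A : Matrix (Fin d) (Fin d) ℝ) (h0 : A.det ≠ 0) (h1 : |A.det| < 1) :
    ∃ y : Fin d → ℤ, y ≠ 0 ∧ ∀ i, |A.mulVec (fun j => (y j : ℝ)) i| < 1 := by
  let L := (Submodule.span ℤ (Set.range (Pi.basisFun ℝ (Fin d)))).toAddSubgroup
  let s : Set (Fin d → ℝ) := (Matrix.toLin' A) ⁻¹' (Set.pi Set.univ fun _ => Set.Ioo (-1 : ℝ) 1)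
  have : Countable L := by
    change Countable (Submodule.span ℤ (Set.range (Pi.basisFun ℝ (Fin d))))
    infer_instance
  have fund : MeasureTheory.IsAddFundamentalDomain L (ZSpan.fundamentalDomain (Pi.basisFun ℝ (Fin d))) MeasureTheory.volume :=
    ZSpan.isAddFundamentalDomain' (Pi.basisFun ℝ (Fin d)) MeasureTheory.volume
  have hs : MeasureTheory.volume (ZSpan.fundamentalDomain (Pi.basisFun ℝ (Fin d))) * 2 ^ Module.finrank ℝ (Fin d → ℝ) < MeasureTheory.volume s := by
    rw [ZSpan.fundamentalDomain_pi_basisFun]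
    have hdet : LinearMap.det (Matrix.toLin' A) ≠ 0 := by rwa [LinearMap.det_toLin']
    rw [MeasureTheory.Measure.addHaar_preimage_linearMap _ hdet, LinearMap.det_toLin',
      Real.volume_pi_Ioo, Real.volume_pi_Ico]
    simp only [Module.finrank_fin_fun]
    norm_num
    have hp : 0 < |A.det| := abs_pos.mpr h0
    have h3 : (1:ENNReal) < ENNReal.ofReal |A.det|⁻¹ := by
      rw [← ENNReal.ofReal_one, ENNReal.ofReal_lt_ofReal_iff (by positivity)]
      exact (one_lt_inv₀ hp).mpr h1
    calc (2:ENNReal)^d = 1 * 2^d := by simp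
      _ < _ := by
        apply ENNReal.mul_lt_mul_left _ _ h3
        · positivity
        · simp
  obtain ⟨x, hx0, hx⟩ := MeasureTheory.exists_ne_zero_mem_lattice_of_measure_mul_two_pow_lt_measure fund
    (s := s) (by
      intro x hx
      simp only [s, Set.mem_preimage, Set.mem_pi, Set.mem_Ioo, map_neg, Pi.neg_apply] at hx ⊢
      intro i hi
      have := hx i hi
      constructor <;> linarith)
    ((convex_pi fun i _ => convex_Ioo _ _).linear_preimage _) hs
  have hmem : (x : Fin d → ℝ) ∈ Submodule.span ℤ (Set.range (Pi.basisFun ℝ (Fin d))) := x.2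
  rw [Module.Basis.mem_span_iff_repr_mem] at hmem
  choose y hy using hmem
  have hxy : (x : Fin d → ℝ) = fun j => (y j : ℝ) := by
    ext j; simpa using (hy j).symm
  refine ⟨y, ?_, ?_⟩
  · rintro rfl
    apply hx0
    ext j
    rw [hxy]; simp
  · intro i
    rw [hxy] at hx
    have := hx i (Set.mem_univ _)
    rw [abs_lt]
    simpa using this

/-- embedding of integer vectors -/
def latE {d : ℕ} (M : Matrix (Fin d) (Fin d) ℝ) (y : Fin d → ℤ) : EuclideanSpace ℝ (Fin d) :=
  WithLp.toLp 2 (M.mulVec fun j => (y j : ℝ))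

theorem latE_tendsto {d : ℕ} (M : Matrix (Fin d) (Fin d) ℝ) (hM : IsUnit M.det) :
    Tendsto (fun y => ‖latE M y‖) cofinite atTop := by
  rw [tendsto_atTop]
  intro R
  have : {y : Fin d → ℤ | ¬ (R ≤ ‖latE M y‖)}.Finite := by
    obtain ⟨C, hC⟩ : ∃ C : ℝ, ∀ i, ∑ j, |M⁻¹ i j| ≤ C := by
      refine ⟨∑ i, ∑ j, |M⁻¹ i j|, fun i => ?_⟩
      exact Finset.single_le_sum (f := fun i => ∑ j, |M⁻¹ i j|) (fun i _ => by positivity) (Finset.mem_univ i)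
    apply Set.Finite.subset (s := Set.pi Set.univ fun _ : Fin d => Set.Icc (-⌈C * R⌉) ⌈C * R⌉)
    · exact Set.Finite.pi' (fun _ => Set.finite_Icc _ _) |>.subset (by intro x hx i; exact hx i (Set.mem_univ _))
    · intro y hy i _
      simp only [Set.mem_ofPred_eq, not_le] at hy
      have e : (fun j => (y j : ℝ)) = M⁻¹.mulVec (M.mulVec fun j => (y j : ℝ)) := by
        rw [Matrix.mulVec_mulVec, Matrix.nonsing_inv_mul _ hM, Matrix.one_mulVec]
      have e2 : (y i : ℝ) = ∑ j, M⁻¹ i j * (latE M y) j := by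
        have := congrFun e i
        simpa [Matrix.mulVec, dotProduct, latE] using this
      have h3 : |(y i : ℝ)| ≤ C * R := by
        rw [e2]
        calc |∑ j, M⁻¹ i j * (latE M y) j| ≤ ∑ j, |M⁻¹ i j| * R := by
              apply (Finset.abs_sum_le_sum_abs _ _).trans
              apply Finset.sum_le_sum
              intro j _
              rw [abs_mul]
              apply mul_le_mul_of_nonneg_left _ (abs_nonneg _)
              have := PiLp.norm_apply_le (latE M y) j
              rw [Real.norm_eq_abs] at this
              linarith
          _ = (∑ j, |M⁻¹ i j|) * R := by rw [Finset.sum_mul]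
          _ ≤ C * R := by
              apply mul_le_mul_of_nonneg_right (hC i)
              exact (norm_nonneg _).trans hy.le
      rw [abs_le] at h3
      have h4 := Int.le_ceil (C * R)
      constructor
      · have : ((-⌈C * R⌉ : ℤ) : ℝ) ≤ (y i : ℝ) := by push_cast; linarith
        exact_mod_cast this
      · have : ((y i : ℤ) : ℝ) ≤ (⌈C * R⌉ : ℤ) := by linarith
        exact_mod_cast this
  exact this

theorem latE_span {d : ℕ} (M : Matrix (Fin d) (Fin d) ℝ) (hM : IsUnit M.det)
    (S : Submodule ℝ (EuclideanSpace ℝ (Fin d))) (hS : ∀ y, latE M y ∈ S) : S = ⊤ := by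
  rw [eq_top_iff]
  intro x _
  have hx : x = ∑ i, (M⁻¹.mulVec x.ofLp i) • latE M (Pi.single i 1) := by
    have e : x.ofLp = M.mulVec (M⁻¹.mulVec x.ofLp) := by
      rw [Matrix.mulVec_mulVec, Matrix.mul_nonsing_inv _ hM, Matrix.one_mulVec]
    have e3 : ∀ i j : Fin d, latE M (Pi.single i 1) j = M j i := by
      intro i j
      simp [latE, Matrix.mulVec, dotProduct, Pi.single_apply]
    ext j
    have := congrFun e j
    rw [this]
    simp only [WithLp.ofLp_sum, WithLp.ofLp_smul, Finset.sum_apply, Pi.smul_apply, e3, smul_eq_mul]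
    rw [Matrix.mulVec, dotProduct]
    exact Finset.sum_congr rfl fun i _ => mul_comm _ _
  rw [hx]
  exact Submodule.sum_mem _ fun i _ => Submodule.smul_mem _ _ (hS _)

theorem latE_greedy {d : ℕ} (M : Matrix (Fin d) (Fin d) ℝ) (hM : IsUnit M.det) (n : ℕ) (hn : n ≤ d) :
    ∃ y : ℕ → (Fin d → ℤ), ∀ j < n,
      latE M (y j) ∉ Submodule.span ℝ ((fun i => latE M (y i)) '' Set.Iio j) ∧
      ∀ x, latE M x ∉ Submodule.span ℝ ((fun i => latE M (y i)) '' Set.Iio j) →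
        ‖latE M (y j)‖ ≤ ‖latE M x‖ := by
  induction n with
  | zero => exact ⟨fun _ => 0, by simp⟩
  | succ n ih =>
    obtain ⟨y, hy⟩ := ih (by omega)
    let S := Submodule.span ℝ ((fun i => latE M (y i)) '' Set.Iio n)
    have hne : {x | latE M x ∉ S}.Nonempty := by
      by_contra hcon
      rw [Set.not_nonempty_iff_eq_empty, Set.eq_empty_iff_forall_notMem] at hcon
      have hS : S = ⊤ := latE_span M hM S (fun x => by simpa using hcon x)
      have h1 : Module.finrank ℝ S ≤ n := by
        have hS' : S = Submodule.span ℝ (((Finset.range n).image (fun i => latE M (y i)) : Finset _) : Set (EuclideanSpace ℝ (Fin d))) := by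
          simp [S]
        rw [hS']
        refine (finrank_span_finset_le_card _).trans (Finset.card_image_le.trans (by simp))
      rw [hS, finrank_top, finrank_euclideanSpace_fin] at h1
      omega
    obtain ⟨a, ha, hmin⟩ := (latE_tendsto M hM).exists_within_forall_le hne
    refine ⟨Function.update y n a, ?_⟩
    have key : ∀ j ≤ n, (fun i => latE M (Function.update y n a i)) '' Set.Iio j = (fun i => latE M (y i)) '' Set.Iio j := by
      intro j hj
      apply Set.image_congr
      intro i hi
      rw [Function.update_of_ne]
      simp at hi; omega
    intro j hj
    rw [key j (by omega)]
    rcases Nat.lt_succ_iff_lt_or_eq.mp hj with h | rfl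
    · rw [Function.update_of_ne (by omega)]
      exact hy j h
    · rw [Function.update_self]
      exact ⟨ha, hmin⟩

theorem latE_reduced {d : ℕ} (hd : 0 < d) (M : Matrix (Fin d) (Fin d) ℝ) (hM : |M.det| = 1) :
    ∃ y : Fin d → (Fin d → ℤ), LinearIndependent ℝ (fun i => latE M (y i)) ∧
      Monotone (fun i => ‖latE M (y i)‖) ∧ ∏ i, ‖latE M (y i)‖ ≤ (Real.sqrt d) ^ d := by
  have hM0 : M.det ≠ 0 := by intro h; simp [h] at hM
  obtain ⟨y, hy⟩ := latE_greedy M hM0.isUnit d le_rfl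
  let v : Fin d → EuclideanSpace ℝ (Fin d) := fun i => latE M (y i)
  have himg : ∀ j : Fin d, (fun i => latE M (y i)) '' Set.Iio (j : ℕ) = v '' Set.Iio j := by
    intro j
    ext x
    constructor
    · rintro ⟨i, hi, rfl⟩
      exact ⟨⟨i, lt_trans hi j.2⟩, hi, rfl⟩
    · rintro ⟨i, hi, rfl⟩
      exact ⟨i, hi, rfl⟩
  have hv1 : ∀ j, v j ∉ Submodule.span ℝ (v '' Set.Iio j) := by
    intro j; rw [← himg]; exact (hy j j.2).1
  have hv2 : ∀ j x, latE M x ∉ Submodule.span ℝ (v '' Set.Iio j) → ‖v j‖ ≤ ‖latE M x‖ := by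
    intro j; rw [← himg]; exact (hy j j.2).2
  have hmono : Monotone (fun i => ‖v i‖) := by
    intro i j hij
    apply hv2
    intro h
    exact hv1 j (Submodule.span_mono (Set.image_mono (Set.Iio_subset_Iio hij)) h)
  have hpos : ∀ i, 0 < ‖v i‖ := by
    intro i
    rw [norm_pos_iff]
    intro h
    apply hv1 i
    rw [h]; exact Submodule.zero_mem _
  have hli : LinearIndependent ℝ v := by
    rw [linearIndependent_iff']
    intro s g hg i his
    by_contra hne
    let t := s.filter (fun i => g i ≠ 0)
    have ht : t.Nonempty := ⟨i, by simp [t, his, hne]⟩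
    let m := t.max' ht
    have hm : m ∈ t := t.max'_mem ht
    have hgm : g m ≠ 0 := (Finset.mem_filter.mp hm).2
    have hsum : ∑ i ∈ t, g i • v i = 0 := by
      rw [← hg]
      apply Finset.sum_subset (Finset.filter_subset _ _)
      intro x hx hxt
      have : g x = 0 := by
        by_contra h
        exact hxt (Finset.mem_filter.mpr ⟨hx, h⟩)
      simp [this]
    rw [← Finset.add_sum_erase _ _ hm] at hsum
    apply hv1 m
    have : v m = (g m)⁻¹ • (-∑ i ∈ t.erase m, g i • v i) := by
      rw [eq_inv_smul_iff₀ hgm]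
      exact eq_neg_of_add_eq_zero_left hsum
    rw [this]
    apply Submodule.smul_mem
    apply Submodule.neg_mem
    apply Submodule.sum_mem
    intro j hj
    apply Submodule.smul_mem
    apply Submodule.subset_span
    exact ⟨j, lt_of_le_of_ne (t.le_max' j (Finset.mem_of_mem_erase hj)) (Finset.ne_of_mem_erase hj), rfl⟩
  refine ⟨fun i => y i, hli, hmono, ?_⟩
  change ∏ i, ‖v i‖ ≤ _
  by_contra! hlt
  have hsd : 0 < Real.sqrt d := Real.sqrt_pos.mpr (by exact_mod_cast hd)
  have hfr : Module.finrank ℝ (EuclideanSpace ℝ (Fin d)) = Fintype.card (Fin d) := by simp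
  let e := InnerProductSpace.gramSchmidtOrthonormalBasis hfr v
  have he : ∀ i j, i < j → inner ℝ (e j) (v i) = 0 := fun i j hij =>
    InnerProductSpace.gramSchmidtOrthonormalBasis_inv_triangular hfr v hij
  let Q : Matrix (Fin d) (Fin d) ℝ := Matrix.of fun i j => e i j
  have hQ : |Q.det| = 1 := by
    have : Q * Q.transpose = 1 := by
      ext i j
      have h := orthonormal_iff_ite.mp e.orthonormal i j
      rw [Matrix.mul_apply, Matrix.one_apply, ← h]
      simp [Q, PiLp.inner_apply, mul_comm]
    have h2 := congrArg Matrix.det this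
    rw [Matrix.det_mul, Matrix.det_transpose, Matrix.det_one] at h2
    have h3 : |Q.det| * |Q.det| = 1 := by rw [← abs_mul, h2, abs_one]
    nlinarith [abs_nonneg Q.det]
  let c : Fin d → ℝ := fun i => Real.sqrt d / ‖v i‖
  let A := Matrix.diagonal c * (Q * M)
  have hA : |A.det| = ∏ i, c i := by
    rw [Matrix.det_mul, Matrix.det_mul, Matrix.det_diagonal, abs_mul, abs_mul, hQ, hM, mul_one, mul_one, abs_of_nonneg]
    apply Finset.prod_nonneg
    intro i _
    exact (div_pos hsd (hpos i)).le
  have hP : 0 < ∏ i, ‖v i‖ := Finset.prod_pos fun i _ => hpos i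
  have hAc : |A.det| = (Real.sqrt d) ^ d / ∏ i, ‖v i‖ := by
    rw [hA, Finset.prod_div_distrib]; simp
  have hA0 : A.det ≠ 0 := by
    rw [← abs_pos, hAc]; positivity
  obtain ⟨x, hx0, hx⟩ := aux_minkowski A hA0 (by rw [hAc, div_lt_one hP]; exact hlt)
  have hAx : ∀ i, A.mulVec (fun j => (x j : ℝ)) i = c i * inner ℝ (e i) (latE M x) := by
    intro i
    simp only [A]
    rw [← Matrix.mulVec_mulVec, Matrix.mulVec_diagonal, ← Matrix.mulVec_mulVec]
    congr 1
    simp [Matrix.mulVec, dotProduct, latE, Q, PiLp.inner_apply, mul_comm]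
  have hb : ∀ i, |inner ℝ (e i) (latE M x)| < ‖v i‖ / Real.sqrt d := by
    intro i
    have h := hx i
    rw [hAx, abs_mul, abs_of_pos (div_pos hsd (hpos i))] at h
    rw [lt_div_iff₀ hsd]
    rw [div_mul_eq_mul_div, div_lt_one (hpos i)] at h
    linarith
  have hnz : latE M x ≠ 0 := by
    intro h
    apply hx0
    have h' : M.mulVec (fun j => (x j : ℝ)) = 0 := by
      have := congrArg WithLp.ofLp h
      simpa [latE] using this
    have := Matrix.eq_zero_of_mulVec_eq_zero hM0 h'
    ext j
    have := congrFun this j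
    simpa using this
  let t := Finset.univ.filter (fun i => inner ℝ (e i) (latE M x) ≠ 0)
  have hnorm : ‖latE M x‖ ^ 2 = ∑ i, (inner ℝ (e i) (latE M x)) ^ 2 := by
    rw [← e.sum_sq_norm_inner_right (latE M x)]
    simp
  have ht : t.Nonempty := by
    by_contra hcon
    rw [Finset.not_nonempty_iff_eq_empty] at hcon
    apply hnz
    rw [← norm_eq_zero, ← sq_eq_zero_iff, hnorm]
    apply Finset.sum_eq_zero
    intro i _
    by_contra h
    have : i ∈ t := Finset.mem_filter.mpr ⟨Finset.mem_univ _, fun h' => h (by rw [h']; simp)⟩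
    rw [hcon] at this
    simp at this
  let m := t.max' ht
  have hm : inner ℝ (e m) (latE M x) ≠ 0 := (Finset.mem_filter.mp (t.max'_mem ht)).2
  have hgt : ∀ i, m < i → inner ℝ (e i) (latE M x) = 0 := by
    intro i hi
    by_contra h
    have : i ∈ t := Finset.mem_filter.mpr ⟨Finset.mem_univ _, h⟩
    exact absurd (t.le_max' i this) (not_le.mpr hi)
  have hns : latE M x ∉ Submodule.span ℝ (v '' Set.Iio m) := by
    intro h
    apply hm
    have : Submodule.span ℝ (v '' Set.Iio m) ≤ LinearMap.ker (innerₛₗ ℝ (e m)) := by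
      rw [Submodule.span_le]
      rintro _ ⟨i, hi, rfl⟩
      simpa using he i m hi
    simpa using this h
  have hge := hv2 m x hns
  have hlt2 : ‖latE M x‖ ^ 2 < ‖v m‖ ^ 2 := by
    rw [hnorm]
    calc ∑ i, (inner ℝ (e i) (latE M x)) ^ 2 < ∑ i : Fin d, ‖v m‖ ^ 2 / d := by
          have hall : ∀ i, (inner ℝ (e i) (latE M x)) ^ 2 < ‖v m‖ ^ 2 / d := by
            intro i
            rcases lt_or_ge m i with h | h
            · rw [hgt i h, zero_pow (by norm_num)]
              have := hpos m
              positivity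
            · have h1 := hb i
              have h2 : ‖v i‖ / Real.sqrt d ≤ ‖v m‖ / Real.sqrt d :=
                div_le_div_of_nonneg_right (hmono h) hsd.le
              rw [← sq_abs]
              calc _ < (‖v m‖ / Real.sqrt d) ^ 2 :=
                    pow_lt_pow_left₀ (h1.trans_le h2) (abs_nonneg _) (by norm_num)
                _ = _ := by rw [div_pow, Real.sq_sqrt (by positivity)]
          exact Finset.sum_lt_sum_of_nonempty ⟨m, Finset.mem_univ _⟩ (fun i _ => hall i)
      _ = ‖v m‖ ^ 2 := by
          have : (d : ℝ) ≠ 0 := by positivity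
          simp; field_simp
  have := pow_le_pow_left₀ (norm_nonneg _) hge 2
  linarith

theorem succ_pair {d : ℕ} (Λ : Set (Fin d → ℝ)) (τ : Fin d → ℝ) (k : ℕ) (hk1 : 1 ≤ k) (hkd : k ≤ d)
    (a b : ℝ) (ha : 0 < a) (hb : 0 < b) (v : Fin k → (Fin d → ℝ)) (w : Fin (d + 1 - k) → (Fin d → ℝ))
    (hv : ∀ l, v l ∈ Λ) (hvi : LinearIndependent ℝ v) (hvb : ∀ l i, |v l i| ≤ a * Real.exp (τ i))
    (hw : ∀ l, w l ∈ dualLattice d Λ) (hwi : LinearIndependent ℝ w)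
    (hwb : ∀ l i, |w l i| ≤ b * Real.exp ((-τ) i)) : 1 ≤ d * (a * b) := by
  obtain ⟨i, j, hij⟩ : ∃ i j, ∑ m, w j m * v i m ≠ 0 := by
    by_contra! hcon
    let V := Submodule.span ℝ (Set.range v)
    let f : (Fin d → ℝ) →ₗ[ℝ] (Fin (d + 1 - k) → ℝ) := Matrix.toLin' (Matrix.of w)
    have hle : V ≤ LinearMap.ker f := by
      rw [Submodule.span_le]
      rintro _ ⟨i, rfl⟩
      simp only [SetLike.mem_coe, LinearMap.mem_ker, f, Matrix.toLin'_apply]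
      ext j
      simpa [Matrix.mulVec, dotProduct] using hcon i j
    have h1 : Module.finrank ℝ V = k := by
      simpa using finrank_span_eq_card hvi
    have h2 : Module.finrank ℝ (LinearMap.range f) = d + 1 - k := by
      have : Matrix.rank (Matrix.of w) = d + 1 - k := by
        have := LinearIndependent.rank_matrix (M := Matrix.of w) hwi
        simpa using this
      rwa [Matrix.rank, ← Matrix.toLin'_apply'] at this
    have h3 := LinearMap.finrank_range_add_finrank_ker f
    have h4 := Submodule.finrank_mono hle
    rw [Module.finrank_fin_fun] at h3
    omega
  obtain ⟨c, hc⟩ := hw j (v i) (hv i)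
  have hc0 : c ≠ 0 := by rintro rfl; apply hij; rw [hc]; simp
  have h1 : (1 : ℝ) ≤ |∑ m, w j m * v i m| := by
    rw [hc]; exact_mod_cast Int.one_le_abs hc0
  refine h1.trans ((Finset.abs_sum_le_sum_abs _ _).trans ?_)
  calc ∑ m, |w j m * v i m| ≤ ∑ m : Fin d, a * b := by
        apply Finset.sum_le_sum
        intro m _
        rw [abs_mul]
        calc |w j m| * |v i m| ≤ (b * Real.exp ((-τ) m)) * (a * Real.exp (τ m)) :=
              mul_le_mul (hwb j m) (hvb i m) (abs_nonneg _) (by positivity)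
          _ = a * b * (Real.exp (-τ m) * Real.exp (τ m)) := by simp only [Pi.neg_apply]; ring
          _ = a * b := by rw [← Real.exp_add]; simp
    _ = d * (a * b) := by simp

theorem exists_families {d : ℕ} (hd : 0 < d) (Λ : Set (Fin d → ℝ))
    (hΛ : IsUnimodularLattice d Λ) (τ : Fin d → ℝ) (hτ : ∑ i, τ i = 0)
    (k : ℕ) (hk1 : 1 ≤ k) (hkd : k ≤ d) :
    ∃ a b : ℝ, 0 < a ∧ 0 < b ∧ a * b ≤ Nat.factorial d ∧
      (∃ v : Fin k → (Fin d → ℝ), (∀ l, v l ∈ Λ) ∧ LinearIndependent ℝ v ∧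
        ∀ l i, |v l i| ≤ a * Real.exp (τ i)) ∧
      (∃ w : Fin (d + 1 - k) → (Fin d → ℝ), (∀ l, w l ∈ dualLattice d Λ) ∧
        LinearIndependent ℝ w ∧ ∀ l i, |w l i| ≤ b * Real.exp ((-τ) i)) := by
  obtain ⟨B, hB, rfl⟩ := hΛ
  let D : Matrix (Fin d) (Fin d) ℝ := Matrix.diagonal fun i => Real.exp (-τ i)
  have hD : D.det = 1 := by
    rw [Matrix.det_diagonal, ← Real.exp_sum, Finset.sum_neg_distrib, hτ]; simp
  let M := D * B
  have hM : |M.det| = 1 := by rw [Matrix.det_mul, hD, one_mul, hB]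
  obtain ⟨y, hli, hmono, hprod⟩ := latE_reduced hd M hM
  have hpos : ∀ i, 0 < ‖latE M (y i)‖ := fun i => norm_pos_iff.mpr (hli.ne_zero i)
  have hMx : ∀ (x : Fin d → ℤ) i, latE M x i = Real.exp (-τ i) * B.mulVec (fun j => (x j : ℝ)) i := by
    intro x i
    simp only [latE, M, D]
    rw [← Matrix.mulVec_mulVec, Matrix.mulVec_diagonal]
  let k0 : Fin d := ⟨k - 1, by omega⟩
  let P := ∏ i, ‖latE M (y i)‖
  have hP : 0 < P := Finset.prod_pos fun i _ => hpos i
  let Y : Matrix (Fin d) (Fin d) ℤ := Matrix.of fun i j => y j i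
  let V : Matrix (Fin d) (Fin d) ℝ := M * Y.map (Int.cast : ℤ → ℝ)
  have hVt : ∀ j, V.transpose j = (latE M (y j)).ofLp := by
    intro j
    ext i
    simp [V, Y, Matrix.mul_apply, latE, Matrix.mulVec, dotProduct]
  have hVdet : V.det ≠ 0 := by
    rw [← Matrix.det_transpose]
    have h : LinearIndependent ℝ (fun j => V.transpose j) := by
      have h2 := hli.map' (WithLp.linearEquiv 2 ℝ (Fin d → ℝ)).toLinearMap (LinearEquiv.ker _)
      have h3 : (fun j => V.transpose j) =
          (WithLp.linearEquiv 2 ℝ (Fin d → ℝ)).toLinearMap ∘ fun i => latE M (y i) := by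
        funext j
        rw [hVt]; rfl
      rw [h3]
      exact h2
    exact (Matrix.linearIndependent_rows_iff_isUnit.mp h |> (Matrix.isUnit_iff_isUnit_det _).mp).ne_zero
  refine ⟨‖latE M (y k0)‖, P / ‖latE M (y k0)‖, hpos _, div_pos hP (hpos _), ?_, ?_, ?_⟩
  · rw [mul_div_cancel₀ _ (hpos k0).ne']
    exact hprod.trans (aux_fact d)
  · refine ⟨fun l => B.mulVec fun j => (y (Fin.castLE hkd l) j : ℝ), fun l => ⟨_, rfl⟩, ?_, ?_⟩
    · have h2 := hli.comp (Fin.castLE hkd) (Fin.castLE_injective hkd)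
      apply LinearIndependent.of_comp ((WithLp.linearEquiv 2 ℝ (Fin d → ℝ)).symm.toLinearMap ∘ₗ Matrix.toLin' D)
      convert h2 using 1
      ext l i
      have h3 := hMx (y (Fin.castLE hkd l)) i
      simp only [Function.comp_apply]
      rw [h3]
      change D.mulVec _ i = _
      simp only [D]
      rw [Matrix.mulVec_diagonal]
    · intro l i
      have h1 := PiLp.norm_apply_le (latE M (y (Fin.castLE hkd l))) i
      have h2 : ‖latE M (y (Fin.castLE hkd l))‖ ≤ ‖latE M (y k0)‖ := by
        apply hmono
        rw [Fin.le_def]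
        have := l.2
        simp [k0]; omega
      rw [hMx, Real.norm_eq_abs, abs_mul, abs_of_pos (Real.exp_pos _), Real.exp_neg] at h1
      have h3 := h1.trans h2
      rw [inv_mul_le_iff₀ (Real.exp_pos _)] at h3
      linarith
  · let W := V.adjugate * D
    let ι : Fin (d + 1 - k) → Fin d := fun l => ⟨l + (k - 1), by omega⟩
    have hι : Function.Injective ι := by
      intro a b h
      simp [ι] at h
      exact Fin.ext h
    refine ⟨fun l => W (ι l), ?_, ?_, ?_⟩
    · rintro l _ ⟨x, rfl⟩
      have hdet : ∃ s : ℤ, M.det = s := by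
        rcases eq_or_eq_neg_of_abs_eq hM with h | h
        · exact ⟨1, by simp [h]⟩
        · exact ⟨-1, by simp [h]⟩
      obtain ⟨s, hs⟩ := hdet
      have e1 : W * B = (Matrix.of fun i j => s * Y.adjugate i j).map (Int.cast : ℤ → ℝ) := by
        have : W * B = V.adjugate * M := by simp [W, M, Matrix.mul_assoc]
        rw [this]
        simp only [V]
        rw [Matrix.adjugate_mul_distrib, Matrix.mul_assoc, Matrix.adjugate_mul, hs]
        have := (Int.castRingHom ℝ).map_adjugate Y
        have h' : (Y.map (Int.cast : ℤ → ℝ)).adjugate = Y.adjugate.map (Int.cast : ℤ → ℝ) := by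
          simpa [RingHom.mapMatrix_apply] using this.symm
        rw [h']
        ext i j
        simp
      refine ⟨((Matrix.of fun i j => s * Y.adjugate i j).mulVec x) (ι l), ?_⟩
      have e2 : ∑ i, W (ι l) i * B.mulVec (fun j => (x j : ℝ)) i = (W.mulVec (B.mulVec fun j => (x j : ℝ))) (ι l) := rfl
      rw [e2, Matrix.mulVec_mulVec, e1]
      simp [Matrix.mulVec, dotProduct]
    · have hW : IsUnit W := by
        rw [Matrix.isUnit_iff_isUnit_det, Matrix.det_mul, hD, mul_one, Matrix.det_adjugate]
        exact (pow_ne_zero _ hVdet).isUnit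
      exact (Matrix.linearIndependent_rows_iff_isUnit.mpr hW).comp ι hι
    · intro l i
      have e : W (ι l) i = V.adjugate (ι l) i * Real.exp (-τ i) := by
        simp [W, D, Matrix.mul_diagonal]
      change |W (ι l) i| ≤ _
      rw [e, abs_mul, abs_of_pos (Real.exp_pos _)]
      simp only [Pi.neg_apply]
      apply mul_le_mul_of_nonneg_right _ (Real.exp_pos _).le
      have e2 : V.adjugate (ι l) i = (V.transpose.updateRow (ι l) (Pi.single i 1)).det := by
        rw [← Matrix.adjugate_apply, ← Matrix.adjugate_transpose, Matrix.transpose_apply]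
      rw [e2]
      refine (aux_hadamard _).trans ?_
      rw [← Finset.mul_prod_erase _ _ (Finset.mem_univ (ι l)), Matrix.updateRow_self]
      have e3 : ‖(WithLp.toLp 2 (Pi.single i 1) : EuclideanSpace ℝ (Fin d))‖ = 1 := by
        have := EuclideanSpace.norm_single (𝕜 := ℝ) i (1 : ℝ)
        simpa using this
      rw [e3, one_mul]
      have e4 : ∏ x ∈ Finset.univ.erase (ι l), ‖(WithLp.toLp 2 (V.transpose.updateRow (ι l) (Pi.single i 1) x) : EuclideanSpace ℝ (Fin d))‖
          = ∏ x ∈ Finset.univ.erase (ι l), ‖latE M (y x)‖ := by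
        apply Finset.prod_congr rfl
        intro x hx
        rw [Matrix.updateRow_ne (Finset.ne_of_mem_erase hx), hVt]
      rw [e4]
      have e5 : ‖latE M (y (ι l))‖ * ∏ x ∈ Finset.univ.erase (ι l), ‖latE M (y x)‖ = P :=
        Finset.mul_prod_erase Finset.univ (fun x => ‖latE M (y x)‖) (Finset.mem_univ (ι l))
      rw [le_div_iff₀ (hpos k0), ← e5, mul_comm]
      apply mul_le_mul_of_nonneg_right
      · apply hmono
        rw [Fin.le_def]
        simp [k0, ι]
      · exact Finset.prod_nonneg fun _ _ => norm_nonneg _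

theorem stmt5 (d : ℕ) (hd : 2 ≤ d) (Λ : Set (Fin d → ℝ))
    (hΛ : IsUnimodularLattice d Λ) (τ : Fin d → ℝ) (hτ : ∑ i, τ i = 0)
    (k : ℕ) (hk1 : 1 ≤ k) (hkd : k ≤ d) :
    -Real.log d ≤ Lk d Λ τ k + Lk d (dualLattice d Λ) (-τ) (d + 1 - k) ∧
    Lk d Λ τ k + Lk d (dualLattice d Λ) (-τ) (d + 1 - k) ≤ Real.log (Nat.factorial d) := by

  obtain ⟨a, b, ha, hb, hab, hA, hB⟩ := exists_families (by omega) Λ hΛ τ hτ k hk1 hkd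
  unfold Lk
  have hd0 : (0 : ℝ) < d := by positivity
  set S1 := {lam : ℝ | 0 < lam ∧ ∃ v : Fin k → (Fin d → ℝ),
    (∀ l, v l ∈ Λ) ∧ LinearIndependent ℝ v ∧ ∀ l i, |v l i| ≤ lam * Real.exp (τ i)} with hS1
  set S2 := {lam : ℝ | 0 < lam ∧ ∃ v : Fin (d + 1 - k) → (Fin d → ℝ),
    (∀ l, v l ∈ dualLattice d Λ) ∧ LinearIndependent ℝ v ∧
      ∀ l i, |v l i| ≤ lam * Real.exp ((-τ) i)} with hS2
  have e1 : succMin d Λ τ k = sInf S1 := rfl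
  have e2 : succMin d (dualLattice d Λ) (-τ) (d + 1 - k) = sInf S2 := rfl
  rw [e1, e2]
  have m1 : a ∈ S1 := ⟨ha, hA⟩
  have m2 : b ∈ S2 := ⟨hb, hB⟩
  have hpair : ∀ x ∈ S1, ∀ z ∈ S2, 1 ≤ d * (x * z) := by
    rintro x ⟨hx, v, hv1, hv2, hv3⟩ z ⟨hz, w, hw1, hw2, hw3⟩
    exact succ_pair Λ τ k hk1 hkd x z hx hz v w hv1 hv2 hv3 hw1 hw2 hw3
  have bd1 : BddBelow S1 := ⟨0, fun x hx => hx.1.le⟩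
  have bd2 : BddBelow S2 := ⟨0, fun x hx => hx.1.le⟩
  have l1 : ∀ z ∈ S2, 1 / (d * z) ≤ sInf S1 := by
    intro z hz
    apply le_csInf ⟨a, m1⟩
    intro x hx
    rw [div_le_iff₀ (mul_pos hd0 hz.1)]
    have := hpair x hx z hz
    linarith
  have p1 : 0 < sInf S1 := lt_of_lt_of_le (by positivity) (l1 b m2)
  have l2 : 1 / (d * sInf S1) ≤ sInf S2 := by
    apply le_csInf ⟨b, m2⟩
    intro z hz
    have h := l1 z hz
    rw [div_le_iff₀ (mul_pos hd0 hz.1)] at h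
    rw [div_le_iff₀ (mul_pos hd0 p1)]
    linarith
  have p2 : 0 < sInf S2 := lt_of_lt_of_le (by positivity) l2
  rw [← Real.log_mul p1.ne' p2.ne', ← Real.log_inv]
  constructor
  · apply Real.log_le_log (by positivity)
    rw [div_le_iff₀ (mul_pos hd0 p1)] at l2
    rw [inv_le_iff_one_le_mul₀ hd0]
    linarith
  · apply Real.log_le_log (by positivity)
    refine le_trans ?_ hab
    exact mul_le_mul (csInf_le bd1 m1) (csInf_le bd2 m2) p2.le ha.le
end
end

section
/- Let Λ be a unimodular lattice in ℝ^d with dual lattice Λ*. For every τ ∈ T and every k = 1,…,d−1 one has −k·log d ≤ S_k(Λ,τ) − S_{d−k}(Λ*,−τ) ≤ (k+1)·log(d!). -/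
open Filter

noncomputable section

open MeasureTheory
open scoped ENNReal
set_option linter.unusedSectionVars false

def NN {G X : Type*} [AddCommGroup G] [AddCommGroup X] (φ : G →+ X) (C : Set X) (x : X) : ℝ≥0∞ :=
  ∑' g : G, C.indicator (fun _ => (1 : ℝ≥0∞)) (x + φ g)

def VV {G X : Type*} [AddCommGroup G] [AddCommGroup X] [MeasurableSpace X] (μ : Measure X)
    (φ : G →+ X) (C : Set X) : ℝ≥0∞ :=
  ∫⁻ x, C.indicator (fun _ => (1 : ℝ≥0∞)) x * (NN φ C x)⁻¹ ∂μ

section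
variable {G X : Type*} [AddCommGroup G] [AddCommGroup X]

lemma NN_add (φ : G →+ X) (C : Set X) (x : X) (h : G) : NN φ C (x + φ h) = NN φ C x := by
  unfold NN
  rw [← (Equiv.addLeft h).tsum_eq (fun g => C.indicator (fun _ => (1 : ℝ≥0∞)) (x + φ g))]
  simp [add_assoc]

lemma NN_neg (φ : G →+ X) (C : Set X) (x : X) :
    ∑' g : G, C.indicator (fun _ => (1 : ℝ≥0∞)) (x - φ g) = NN φ C x := by
  unfold NN
  rw [← (Equiv.neg G).tsum_eq (fun g => C.indicator (fun _ => (1 : ℝ≥0∞)) (x + φ g))]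
  simp [sub_eq_add_neg]

lemma NN_pos (φ : G →+ X) (C : Set X) (x : X) (g : G) (h : x + φ g ∈ C) : 1 ≤ NN φ C x := by
  unfold NN
  refine le_trans ?_ (ENNReal.le_tsum g)
  simp [h]

variable [MeasurableSpace X] [MeasurableAdd₂ X] [Countable G]

lemma NN_meas (φ : G →+ X) {C : Set X} (hC : MeasurableSet C) : Measurable (NN φ C) := by
  unfold NN
  refine Measurable.tsum fun g => ?_
  exact (measurable_const.indicator hC).comp (measurable_add_const _)

lemma VV_mono (μ : Measure X) [μ.IsAddLeftInvariant] (φ : G →+ X) {C C' : Set X}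
    (hC : MeasurableSet C) (hC' : MeasurableSet C')
    (h1 : ∀ x ∈ C, ∃ g, x + φ g ∈ C') (h2 : ∀ x, NN φ C' x ≠ ∞) :
    VV μ φ C ≤ VV μ φ C' := by
  have mC : Measurable (C.indicator (fun _ => (1 : ℝ≥0∞))) := measurable_const.indicator hC
  have mC' : Measurable (C'.indicator (fun _ => (1 : ℝ≥0∞))) := measurable_const.indicator hC'
  have mN := NN_meas φ hC
  have mN' := NN_meas φ hC'
  calc VV μ φ C ≤ ∫⁻ x, ∑' g : G, C.indicator (fun _ => (1 : ℝ≥0∞)) x *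
          C'.indicator (fun _ => (1 : ℝ≥0∞)) (x + φ g) * ((NN φ C x)⁻¹ * (NN φ C' x)⁻¹) ∂μ := by
        refine lintegral_mono fun x => ?_
        simp only
        rw [ENNReal.tsum_mul_right, ENNReal.tsum_mul_left]
        by_cases hx : x ∈ C
        · obtain ⟨g, hg⟩ := h1 x hx
          have h3 := NN_pos φ C' x g hg
          change _ ≤ C.indicator (fun _ => (1 : ℝ≥0∞)) x * NN φ C' x * _
          have : NN φ C' x * (NN φ C' x)⁻¹ = 1 :=
            ENNReal.mul_inv_cancel (by positivity) (h2 x)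
          rw [mul_assoc, mul_comm (NN φ C x)⁻¹, ← mul_assoc (NN φ C' x), this, one_mul]
        · simp [hx]
    _ = ∑' g : G, ∫⁻ x, C.indicator (fun _ => (1 : ℝ≥0∞)) x *
          C'.indicator (fun _ => (1 : ℝ≥0∞)) (x + φ g) * ((NN φ C x)⁻¹ * (NN φ C' x)⁻¹) ∂μ := by
        refine lintegral_tsum fun g => Measurable.aemeasurable ?_
        exact (mC.mul (mC'.comp (measurable_add_const _))).mul (mN.inv.mul mN'.inv)
    _ = ∑' g : G, ∫⁻ x, C.indicator (fun _ => (1 : ℝ≥0∞)) (x - φ g) *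
          C'.indicator (fun _ => (1 : ℝ≥0∞)) x * ((NN φ C x)⁻¹ * (NN φ C' x)⁻¹) ∂μ := by
        congr 1; ext g
        rw [← lintegral_add_right_eq_self (μ := μ) (fun x => C.indicator (fun _ => (1 : ℝ≥0∞)) (x - φ g) *
          C'.indicator (fun _ => (1 : ℝ≥0∞)) x * ((NN φ C x)⁻¹ * (NN φ C' x)⁻¹)) (φ g)]
        simp [NN_add]
    _ = ∫⁻ x, ∑' g : G, C.indicator (fun _ => (1 : ℝ≥0∞)) (x - φ g) *
          C'.indicator (fun _ => (1 : ℝ≥0∞)) x * ((NN φ C x)⁻¹ * (NN φ C' x)⁻¹) ∂μ := by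
        symm
        refine lintegral_tsum fun g => Measurable.aemeasurable ?_
        have : Measurable fun x => C.indicator (fun _ => (1 : ℝ≥0∞)) (x - φ g) := by
          simp_rw [sub_eq_add_neg]
          exact mC.comp (measurable_add_const _)
        exact (this.mul mC').mul (mN.inv.mul mN'.inv)
    _ ≤ VV μ φ C' := by
        refine lintegral_mono fun x => ?_
        simp only
        rw [ENNReal.tsum_mul_right, ENNReal.tsum_mul_right, NN_neg]
        calc _ = C'.indicator (fun _ => (1 : ℝ≥0∞)) x * (NN φ C' x)⁻¹ *
              (NN φ C x * (NN φ C x)⁻¹) := by ring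
          _ ≤ C'.indicator (fun _ => (1 : ℝ≥0∞)) x * (NN φ C' x)⁻¹ * 1 := by
              gcongr; exact ENNReal.mul_inv_le_one _
          _ = _ := by rw [mul_one]

lemma VV_trans (μ : Measure X) [μ.IsAddLeftInvariant] (φ : G →+ X) (C : Set X) (c : X) :
    VV μ φ ((· + c) ⁻¹' C) = VV μ φ C := by
  unfold VV
  rw [← lintegral_add_right_eq_self (μ := μ)
    (fun x => C.indicator (fun _ => (1 : ℝ≥0∞)) x * (NN φ C x)⁻¹) c]
  congr 1; ext x
  have : NN φ ((· + c) ⁻¹' C) x = NN φ C (x + c) := by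
    unfold NN
    congr 1; ext g
    rw [add_right_comm]; rfl
  rw [this]; rfl

/-- Fubini -/
lemma VV_prod {Y : Type*} [AddCommGroup Y] [MeasurableSpace Y] [MeasurableAdd₂ (X × Y)]
    (μ : Measure X) [SFinite μ] (ν : Measure Y) [SFinite ν] (φ : G →+ X × Y)
    (hφ : ∀ g, (φ g).2 = 0) {C : Set (X × Y)} (hC : MeasurableSet C) :
    VV (μ.prod ν) φ C =
      ∫⁻ y, VV μ ((AddMonoidHom.fst X Y).comp φ) ((fun x => (x, y)) ⁻¹' C) ∂ν := by
  unfold VV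
  rw [lintegral_prod_symm]
  · congr 1; ext y; congr 1; ext x
    have : NN φ C (x, y) = NN ((AddMonoidHom.fst X Y).comp φ) ((fun x => (x, y)) ⁻¹' C) x := by
      unfold NN
      congr 1; ext g
      have : (x, y) + φ g = (x + (φ g).1, y) := by ext <;> simp [hφ]
      rw [this]; rfl
    rw [this]; rfl
  · exact ((measurable_const.indicator hC).mul (NN_meas φ hC).inv).aemeasurable

lemma VV_map {X' : Type*} [AddCommGroup X'] [MeasurableSpace X'] [MeasurableAdd₂ X']
    (μ : Measure X) (ν : Measure X') (e : X ≃ᵐ X') (he : MeasurePreserving e μ ν)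
    (φ : G →+ X) (ψ : G →+ X') (h : ∀ x g, e (x + φ g) = e x + ψ g) {C : Set X'} :
    VV μ φ (e ⁻¹' C) = VV ν ψ C := by
  unfold VV
  rw [← he.lintegral_comp_emb e.measurableEmbedding]
  congr 1; ext x
  have : NN φ (e ⁻¹' C) x = NN ψ C (e x) := by
    unfold NN
    congr 1; ext g
    rw [← h]; rfl
  rw [this]; rfl
end

lemma lint_smul {Y : Type*} [NormedAddCommGroup Y] [NormedSpace ℝ Y] [FiniteDimensional ℝ Y]
   [MeasurableSpace Y] [BorelSpace Y] (ν : Measure Y) [ν.IsAddHaarMeasure] (f : Y → ℝ≥0∞)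
   (c : ℝ) (hc : 0 < c) :
   ∫⁻ y, f y ∂ν = ENNReal.ofReal (c ^ Module.finrank ℝ Y) * ∫⁻ y, f (c • y) ∂ν := by
  have h := Measure.map_addHaar_smul ν hc.ne'
  have h2 : ∫⁻ y, f (c • y) ∂ν = ∫⁻ y, f y ∂(Measure.map (c • ·) ν) := by
    exact (lintegral_map_equiv f (Homeomorph.smulOfNeZero c hc.ne').toMeasurableEquiv).symm
  rw [h2, h, lintegral_smul_measure, smul_eq_mul, ← mul_assoc, ← ENNReal.ofReal_mul (by positivity),
    abs_of_pos (by positivity), mul_inv_cancel₀ (by positivity)]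
  simp

lemma NN_slice {G X Y : Type*} [AddCommGroup G] [AddCommGroup X] [AddCommGroup Y] (φ : G →+ X × Y)
    (hφ : ∀ g, (φ g).2 = 0) (C : Set (X × Y)) (x : X) (y : Y) :
    NN ((AddMonoidHom.fst X Y).comp φ) ((fun x => (x, y)) ⁻¹' C) x = NN φ C (x, y) := by
  unfold NN
  congr 1; ext g
  have : (x, y) + φ g = (x + (φ g).1, y) := by ext <;> simp [hφ]
  rw [this]; rfl

lemma NN_trans {G X : Type*} [AddCommGroup G] [AddCommGroup X] (φ : G →+ X) (C : Set X) (c x : X) :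
    NN φ ((· + c) ⁻¹' C) x = NN φ C (x + c) := by
  unfold NN
  congr 1; ext g
  rw [add_right_comm]; rfl

lemma VV_scale {G X Y E : Type*} [AddCommGroup G] [Countable G]
    [NormedAddCommGroup X] [NormedSpace ℝ X] [FiniteDimensional ℝ X] [MeasurableSpace X] [BorelSpace X]
    [NormedAddCommGroup Y] [NormedSpace ℝ Y] [FiniteDimensional ℝ Y] [MeasurableSpace Y] [BorelSpace Y]
    [NormedAddCommGroup E] [NormedSpace ℝ E]
    (μ : Measure X) [μ.IsAddHaarMeasure] (ν : Measure Y) [ν.IsAddHaarMeasure]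
    (φ : G →+ X × Y) (hφ : ∀ g, (φ g).2 = 0) (L : X × Y →ₗ[ℝ] E) (r s : ℝ) (hr : 0 < r) (hrs : r ≤ s)
    (hfin : ∀ x, NN φ {p | ‖L p‖ < s} x ≠ ∞) :
    ENNReal.ofReal ((s / r) ^ Module.finrank ℝ Y) * VV (μ.prod ν) φ {p | ‖L p‖ < r} ≤
      VV (μ.prod ν) φ {p | ‖L p‖ < s} := by
  have hs : 0 < s := hr.trans_le hrs
  have hL : Continuous L := L.continuous_of_finiteDimensional
  have ho : ∀ t : ℝ, IsOpen {p | ‖L p‖ < t} := fun t => isOpen_lt hL.norm continuous_const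
  have : ProperSpace X := FiniteDimensional.proper_real X
  have : ProperSpace Y := FiniteDimensional.proper_real Y
  have : SecondCountableTopology X := inferInstance
  have : SecondCountableTopology Y := inferInstance
  have hm : ∀ t : ℝ, MeasurableSet {p | ‖L p‖ < t} := fun t => (ho t).measurableSet
  rw [VV_prod μ ν φ hφ (hm r), VV_prod μ ν φ hφ (hm s), lint_smul ν (fun y => VV μ ((AddMonoidHom.fst X Y).comp φ)
      ((fun x => (x, y)) ⁻¹' {p | ‖L p‖ < s})) (s / r) (by positivity)]
  refine mul_le_mul' le_rfl (lintegral_mono fun y => ?_)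
  beta_reduce
  have hm' : ∀ (t : ℝ) (y : Y), MeasurableSet ((fun x => (x, y)) ⁻¹' {p : X × Y | ‖L p‖ < t}) :=
    fun t y => (hm t).preimage (by fun_prop)
  rcases Set.eq_empty_or_nonempty ((fun x => (x, y)) ⁻¹' {p : X × Y | ‖L p‖ < r}) with h0 | ⟨x0, h0⟩
  · rw [h0]; simp [VV]
  · rw [← VV_trans μ _ ((fun x => (x, (s / r) • y)) ⁻¹' {p : X × Y | ‖L p‖ < s}) ((s / r - 1) • x0)]
    refine VV_mono μ _ (hm' _ _) ((hm' _ _).preimage (by fun_prop)) ?_ ?_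
    · intro x hx
      refine ⟨0, ?_⟩
      simp only [Set.mem_preimage, Set.mem_ofPred_eq, map_zero, add_zero] at hx h0 ⊢
      have e : (x + (s / r - 1) • x0, (s / r) • y) = (x, y) + (s / r - 1) • (x0, y) := by
        ext
        · simp
        · simp [sub_smul]
      rw [e, map_add, map_smul]
      have h1 : 0 ≤ s / r - 1 := by
        rw [sub_nonneg, le_div_iff₀ hr]; linarith
      calc _ ≤ ‖L (x, y)‖ + (s / r - 1) * ‖L (x0, y)‖ := by
            refine (norm_add_le _ _).trans ?_
            rw [norm_smul, Real.norm_of_nonneg h1]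
        _ < r + (s / r - 1) * r := by
            have := mul_le_mul_of_nonneg_left h0.le h1
            linarith
        _ = s := by field_simp; ring
    · intro x
      rw [NN_trans, NN_slice _ hφ]
      exact hfin _

lemma VV_scale_pi {G E : Type*} [AddCommGroup G] [Countable G]
    [NormedAddCommGroup E] [NormedSpace ℝ E] {d : ℕ} (p : Fin d → Prop) [DecidablePred p]
    (φ : G →+ (Fin d → ℝ)) (hφ : ∀ g j, ¬ p j → φ g j = 0) (L : (Fin d → ℝ) →ₗ[ℝ] E)
    (r s : ℝ) (hr : 0 < r) (hrs : r ≤ s)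
    (hfin : ∀ x, NN φ {p | ‖L p‖ < s} x ≠ ∞) :
    ENNReal.ofReal ((s / r) ^ Fintype.card {j // ¬ p j}) * VV volume φ {p | ‖L p‖ < r} ≤
      VV volume φ {p | ‖L p‖ < s} := by
  let e := MeasurableEquiv.piEquivPiSubtypeProd (fun _ : Fin d => ℝ) p
  have he := volume_preserving_piEquivPiSubtypeProd (fun _ : Fin d => ℝ) p
  let el : (Fin d → ℝ) ≃ₗ[ℝ] ({j // p j} → ℝ) × ({j // ¬ p j} → ℝ) :=
    { e.toEquiv with
      map_add' := fun x y => rfl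
      map_smul' := fun c x => rfl }
  let ψ : G →+ ({j // p j} → ℝ) × ({j // ¬ p j} → ℝ) := el.toLinearMap.toAddMonoidHom.comp φ
  have hψ : ∀ g, (ψ g).2 = 0 := by
    intro g; ext j; exact hφ g j j.2
  have hadd : ∀ x g, e (x + φ g) = e x + ψ g := fun x g => rfl
  have hC : ∀ t : ℝ, {p | ‖L p‖ < t} = e ⁻¹' {q | ‖(L ∘ₗ el.symm.toLinearMap) q‖ < t} := by
    intro t; ext x
    have : el.symm (e x) = x := el.symm_apply_apply x
    simp [this]
  have h1 : ∀ t : ℝ, VV volume φ {p | ‖L p‖ < t} =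
      VV (volume.prod volume) ψ {q | ‖(L ∘ₗ el.symm.toLinearMap) q‖ < t} := by
    intro t
    rw [hC, VV_map volume _ e he φ ψ hadd]
    rfl
  rw [h1, h1]
  have := VV_scale (volume : Measure ({j // p j} → ℝ)) (volume : Measure ({j // ¬ p j} → ℝ)) ψ hψ
    (L ∘ₗ el.symm.toLinearMap) r s hr hrs ?_
  · simpa using this
  · intro q
    have := hfin (el.symm q)
    rw [hC] at this
    convert this using 1
    unfold NN
    congr 1; ext g
    have : q + ψ g = e (el.symm q + φ g) := by
      rw [hadd]; congr 1; exact (el.apply_symm_apply q).symm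
    rw [this]; rfl

lemma finite_ball {d : ℕ} (G : Matrix (Fin d) (Fin d) ℝ) (hG : |G.det| = 1) (R : ℝ) :
    {z : Fin d → ℤ | ‖G.mulVec (fun i => (z i : ℝ))‖ ≤ R}.Finite := by
  have hu : IsUnit G.det := by
    rw [isUnit_iff_ne_zero]; intro h; simp [h] at hG
  let T : (Fin d → ℝ) →L[ℝ] (Fin d → ℝ) := LinearMap.toContinuousLinearMap (Matrix.mulVecLin G⁻¹)
  refine Set.Finite.subset (isCompact_closedBall (0 : Fin d → ℤ) (‖T‖ * R)).finite_of_discrete ?_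
  intro z hz
  simp only [Set.mem_ofPred_eq] at hz
  rw [mem_closedBall_zero_iff]
  have h1 : ‖z‖ = ‖(fun i => (z i : ℝ))‖ := by
    simp [Pi.norm_def]
    congr 1
  have h2 : (fun i => (z i : ℝ)) = T (G.mulVec (fun i => (z i : ℝ))) := by
    simp [T, Matrix.mulVec_mulVec, Matrix.nonsing_inv_mul _ hu]
  rw [h1, h2]
  exact (T.le_opNorm _).trans (by gcongr)

lemma NN_fin {G X : Type*} [AddCommGroup G] [AddCommGroup X] (φ : G →+ X) (C : Set X) (x : X)
    (h : {g | x + φ g ∈ C}.Finite) : NN φ C x ≠ ∞ := by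
  unfold NN
  rw [tsum_eq_sum (s := h.toFinset)]
  · refine ENNReal.sum_ne_top.2 fun g _ => ?_
    by_cases hg : x + φ g ∈ C <;> simp [hg]
  · intro g hg
    have : x + φ g ∉ C := by simpa using hg
    simp [this]

theorem minkowski2 {d : ℕ} (G : Matrix (Fin d) (Fin d) ℝ) (hG : |G.det| = 1)
    (v : Fin d → Fin d → ℝ) (hv : LinearIndependent ℝ v) (hmono : Monotone fun j => ‖v j‖)
    (hmin : ∀ (x : Fin d → ℤ) (i : Fin d), ‖G.mulVec (fun i => (x i : ℝ))‖ < ‖v i‖ →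
      G.mulVec (fun i => (x i : ℝ)) ∈ Submodule.span ℝ (v '' Set.Iio i)) :
    ∏ i, ‖v i‖ ≤ 1 := by
  classical
  rcases Nat.eq_zero_or_pos d with rfl | hd
  · simp
  have hu : IsUnit G.det := by
    rw [isUnit_iff_ne_zero]; intro h; simp [h] at hG
  have : Nonempty (Fin d) := ⟨⟨0, hd⟩⟩
  let b := basisOfLinearIndependentOfCardEqFinrank hv (by simp)
  have hb : ⇑b = v := coe_basisOfLinearIndependentOfCardEqFinrank hv (by simp)
  let L : (Fin d → ℝ) ≃ₗ[ℝ] (Fin d → ℝ) := b.equivFun.symm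
  let ι : (Fin d → ℤ) →+ (Fin d → ℝ) :=
    { toFun := fun z i => (z i : ℝ)
      map_zero' := by ext; simp
      map_add' := fun x y => by ext; simp }
  let Φ : (Fin d → ℤ) →+ (Fin d → ℝ) :=
    (L.symm.toLinearMap.toAddMonoidHom.comp (Matrix.mulVecLin G).toAddMonoidHom).comp ι
  have hLΦ : ∀ z, L (Φ z) = G.mulVec (fun i => (z i : ℝ)) := fun z => L.apply_symm_apply _
  let H : ℕ → AddSubgroup (Fin d → ℤ) := fun i =>
    { carrier := {z | ∀ j : Fin d, i ≤ j → Φ z j = 0}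
      zero_mem' := by intro j _; rw [map_zero]; rfl
      add_mem' := by
        intro x y hx hy j hj
        rw [map_add, Pi.add_apply, hx j hj, hy j hj, add_zero]
      neg_mem' := by
        intro x hx j hj
        rw [map_neg, Pi.neg_apply, hx j hj, neg_zero] }
  have hH : ∀ i z, z ∈ H i ↔ ∀ j : Fin d, i ≤ j → Φ z j = 0 := fun i z => Iff.rfl
  let φ : ∀ i, H i →+ (Fin d → ℝ) := fun i => Φ.comp (H i).subtype
  let ρ : ℕ → ℝ := fun n => if h : n < d then ‖v ⟨n, h⟩‖ else 1
  have hρ : ∀ n (h : n < d), ρ n = ‖v ⟨n, h⟩‖ := fun n h => dif_pos h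
  have hρpos : ∀ n, n < d → 0 < ρ n := by
    intro n h; rw [hρ n h]; exact norm_pos_iff.2 (hv.ne_zero _)
  have hρmono : ∀ n, n + 1 < d → ρ n ≤ ρ (n + 1) := by
    intro n h; rw [hρ n (by omega), hρ _ h]; exact hmono (by simp)
  have hmin' : ∀ n, n < d → ∀ z, ‖L (Φ z)‖ < ρ n → z ∈ H n := by
    intro n hn z hz
    rw [hρ n hn, hLΦ] at hz
    have h := hmin z _ hz
    rw [← hb, Module.Basis.mem_span_image] at h
    intro j hj
    by_contra hne
    have : j ∈ (b.repr (G.mulVec (fun i => (z i : ℝ)))).support := by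
      rw [Finsupp.mem_support_iff]; exact hne
    have := h this
    simp only [Set.mem_Iio, Fin.lt_def] at this
    omega
  let K : ℝ → Set (Fin d → ℝ) := fun t => {p | ‖L.toLinearMap p‖ < t}
  have hfin : ∀ i t x, NN (φ i) (K t) x ≠ ∞ := by
    intro i t x
    refine NN_fin _ _ _ (Set.Finite.of_finite_image (f := Subtype.val)
      ((finite_ball G hG (t + ‖L x‖)).subset ?_) Subtype.val_injective.injOn)
    rintro _ ⟨g, hg, rfl⟩
    have hg' : ‖L (x + Φ g)‖ < t := hg
    rw [map_add, hLΦ] at hg'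
    simp only [Set.mem_ofPred_eq]
    have := norm_sub_le (L x + G.mulVec (fun i => ((g : Fin d → ℤ) i : ℝ))) (L x)
    rw [add_sub_cancel_left] at this
    linarith
  have hKm : ∀ t, MeasurableSet (K t) := fun t =>
    (isOpen_lt (L.toLinearMap.continuous_of_finiteDimensional).norm continuous_const).measurableSet
  have hNsum : ∀ i C x, NN (φ i) C x =
      ∑' z, (H i : Set (Fin d → ℤ)).indicator (fun z => C.indicator (fun _ => (1 : ℝ≥0∞)) (x + Φ z)) z := by
    intro i C x
    exact tsum_subtype (H i : Set (Fin d → ℤ)) (fun z => C.indicator (fun _ => (1 : ℝ≥0∞)) (x + Φ z))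
  let W : ℕ → ℝ → ℝ≥0∞ := fun i r => VV volume (φ i) (K (r / 2))
  have hstep : ∀ n, n < d → W (n + 1) (ρ n) = W n (ρ n) := by
    intro n hn
    refine lintegral_congr fun x => ?_
    by_cases hx : x ∈ K (ρ n / 2)
    · congr 2
      rw [hNsum, hNsum]
      congr 1; ext z
      by_cases hz : x + Φ z ∈ K (ρ n / 2)
      · have h1 : z ∈ H n := by
          apply hmin' n hn
          have e : L (Φ z) = L (x + Φ z) - L x := by rw [map_add]; abel
          rw [e]
          have h2 : ‖L x‖ < ρ n / 2 := hx
          have h3 : ‖L (x + Φ z)‖ < ρ n / 2 := hz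
          have := norm_sub_le (L (x + Φ z)) (L x)
          linarith
        have h2 : z ∈ H (n + 1) := fun j hj => h1 j (by omega)
        simp [h1, h2]
      · simp [Set.indicator, hz]
    · simp [hx]
  have hscale : ∀ n, n + 1 < d → ENNReal.ofReal ((ρ (n + 1) / ρ n) ^ (d - (n + 1))) * W (n + 1) (ρ n) ≤
      W (n + 1) (ρ (n + 1)) := by
    intro n hn
    have h0 := hρpos n (by omega)
    have := VV_scale_pi (fun j : Fin d => (j : ℕ) < n + 1) (φ (n + 1))
      (fun g j hj => g.2 j (by omega)) L.toLinearMap (ρ n / 2) (ρ (n + 1) / 2) (by linarith)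
      (by linarith [hρmono n hn]) (hfin _ _)
    have hc : Fintype.card {j : Fin d // ¬ (j : ℕ) < n + 1} = d - (n + 1) := by
      rw [Fintype.card_subtype_compl, Fintype.card_fin, Fintype.card_subtype]
      congr 1
      have : (Finset.univ.filter fun j : Fin d => (j : ℕ) < n + 1) = Finset.Iio ⟨n + 1, hn⟩ := by
        ext j; simp [Fin.lt_def]
      rw [this, Fin.card_Iio]
    rw [hc, div_div_div_cancel_right₀ (by norm_num)] at this
    exact this
  set D : ℝ≥0∞ := ENNReal.ofReal |(LinearMap.det L.toLinearMap)⁻¹| with hD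
  have hdet : LinearMap.det L.toLinearMap ≠ 0 := (LinearEquiv.isUnit_det' L).ne_zero
  have hD0 : D ≠ 0 := by
    rw [hD]; simp [hdet]
  have hDt : D ≠ ∞ := ENNReal.ofReal_ne_top
  have hvolK : ∀ r, 0 < r → volume (K (r / 2)) = ENNReal.ofReal (r ^ d) * D := by
    intro r hr
    have : K (r / 2) = L.toLinearMap ⁻¹' (Metric.ball 0 (r / 2)) := by
      ext x; simp [K]
    rw [this, Measure.addHaar_preimage_linearMap _ hdet, Real.volume_pi_ball _ (by positivity), mul_comm,
      Fintype.card_fin, mul_div_cancel₀ r (by norm_num : (2 : ℝ) ≠ 0)]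
  have hchain : ∀ n, n < d →
      ENNReal.ofReal (ρ n ^ (d - n) * ∏ j ∈ Finset.range n, ρ j) * D ≤ W n (ρ n) := by
    intro n
    induction n with
    | zero =>
      intro h
      have : W 0 (ρ 0) = volume (K (ρ 0 / 2)) := by
        rw [← lintegral_indicator_one (hKm _)]
        refine lintegral_congr fun x => ?_
        by_cases hx : x ∈ K (ρ 0 / 2)
        · have : NN (φ 0) (K (ρ 0 / 2)) x = 1 := by
            unfold NN
            rw [tsum_eq_single 0]
            · simp [hx]
            · intro g hg
              exfalso; apply hg
              have h1 : Φ g = 0 := by ext j; exact g.2 j (by omega)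
              have h2 := hLΦ g
              rw [h1, map_zero] at h2
              have h3 : (fun i => ((g : Fin d → ℤ) i : ℝ)) = 0 := by
                have := congrArg (G⁻¹.mulVec) h2
                rw [Matrix.mulVec_mulVec, Matrix.nonsing_inv_mul _ hu, Matrix.one_mulVec,
                  Matrix.mulVec_zero] at this
                exact this.symm
              ext j
              have := congrFun h3 j
              simpa using this
          simp [this, hx]
        · simp [hx]
      rw [this, hvolK _ (hρpos 0 h)]
      simp
    | succ n ih =>
      intro h
      have h0 := hρpos n (by omega)
      have h1 := hρpos (n + 1) h
      have hi := ih (by omega)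
      refine le_trans ?_ (hscale n h)
      rw [hstep n (by omega)]
      refine le_trans ?_ (mul_le_mul' le_rfl hi)
      rw [← mul_assoc, ← ENNReal.ofReal_mul (pow_nonneg (div_nonneg h1.le h0.le) _)]
      refine le_of_eq ?_
      congr 2
      rw [Finset.prod_range_succ, div_pow]
      have : d - n = (d - (n + 1)) + 1 := by omega
      rw [this, pow_succ]
      field_simp
  have hlast := hchain (d - 1) (by omega)
  rw [← hstep (d - 1) (by omega)] at hlast
  -- fundamental domain
  have hbound : W (d - 1 + 1) (ρ (d - 1)) ≤ D := by
    have hdd : d - 1 + 1 = d := by omega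
    rw [hdd]
    let A : (Fin d → ℝ) →ₗ[ℝ] (Fin d → ℝ) := (Matrix.mulVecLin G⁻¹) ∘ₗ L.toLinearMap
    let F : Set (Fin d → ℝ) := A ⁻¹' (Set.univ.pi fun _ => Set.Ico 0 1)
    have hdetA : |(LinearMap.det A)⁻¹| = |(LinearMap.det L.toLinearMap)⁻¹| := by
      have : LinearMap.det (Matrix.mulVecLin G⁻¹) = (G.det)⁻¹ := by
        rw [← Matrix.toLin'_apply', LinearMap.det_toLin', Matrix.det_nonsing_inv, Ring.inverse_eq_inv']
      rw [LinearMap.det_comp, this, abs_inv, abs_inv, abs_mul, abs_inv, hG]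
      simp
    have hdetA0 : LinearMap.det A ≠ 0 := by
      intro h; rw [h] at hdetA; simp at hdetA; exact hdet (abs_eq_zero.1 hdetA.symm)
    have hvF : volume F = D := by
      rw [Measure.addHaar_preimage_linearMap _ hdetA0, hdetA, Real.volume_pi_Ico]
      simp [hD]
    have hFm : MeasurableSet F :=
      (MeasurableSet.univ_pi fun _ => measurableSet_Ico).preimage
        A.continuous_of_finiteDimensional.measurable
    have hAΦ : ∀ z : Fin d → ℤ, A (Φ z) = fun i => (z i : ℝ) := by
      intro z
      change G⁻¹.mulVec (L (Φ z)) = _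
      rw [hLΦ, Matrix.mulVec_mulVec, Matrix.nonsing_inv_mul _ hu, Matrix.one_mulVec]
    have hVF : VV volume (φ d) F ≤ D := by
      rw [← hvF, ← lintegral_indicator_one hFm]
      refine lintegral_mono fun x => ?_
      by_cases hx : x ∈ F
      · have : 1 ≤ NN (φ d) F x := NN_pos _ _ _ 0 (by simpa using hx)
        simpa [hx] using this
      · simp [hx]
    refine le_trans (VV_mono volume (φ d) (hKm _) hFm ?_ ?_) hVF
    · intro x _
      refine ⟨⟨fun i => -⌊A x i⌋, fun j hj => absurd j.2 (by omega)⟩, ?_⟩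
      change A (x + Φ (fun i => -⌊A x i⌋)) ∈ (Set.univ.pi fun _ => Set.Ico (0 : ℝ) 1)
      rw [map_add, hAΦ]
      intro i _
      simp only [Pi.add_apply, Int.cast_neg, Set.mem_Ico]
      constructor
      · linarith [Int.floor_le (A x i)]
      · linarith [Int.lt_floor_add_one (A x i)]
    · intro x
      refine NN_fin _ _ _ (Set.Finite.of_finite_image (f := Subtype.val) (Set.Finite.subset
        (isCompact_closedBall (0 : Fin d → ℤ) (‖A x‖ + 1)).finite_of_discrete ?_)
          Subtype.val_injective.injOn)
      rintro _ ⟨g, hg, rfl⟩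
      have hg' : A (x + Φ g) ∈ (Set.univ.pi fun _ => Set.Ico (0 : ℝ) 1) := hg
      rw [map_add, hAΦ] at hg'
      rw [mem_closedBall_zero_iff, pi_norm_le_iff_of_nonneg (by positivity)]
      intro i
      have h1 := hg' i (Set.mem_univ _)
      have h2 := norm_le_pi_norm (A x) i
      simp only [Pi.add_apply, Set.mem_Ico] at h1
      rw [Int.norm_eq_abs]
      rw [Real.norm_eq_abs] at h2
      rw [abs_le] at h2 ⊢
      constructor <;> linarith
  have hfinal := hlast.trans hbound
  have hprod : ρ (d - 1) ^ (d - (d - 1)) * ∏ j ∈ Finset.range (d - 1), ρ j = ∏ i, ‖v i‖ := by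
    have h1 : d - (d - 1) = 1 := by omega
    rw [h1, pow_one, mul_comm, ← Finset.prod_range_succ, show d - 1 + 1 = d by omega,
      Finset.prod_range]
    exact Finset.prod_congr rfl fun i _ => hρ i i.2
  rw [hprod] at hfinal
  have h2 : ENNReal.ofReal (∏ i, ‖v i‖) ≤ 1 := by
    by_contra hlt
    push Not at hlt
    have : 1 * D < ENNReal.ofReal (∏ i, ‖v i‖) * D := by
      exact (ENNReal.mul_lt_mul_iff_left hD0 hDt).2 hlt
    rw [one_mul] at this
    exact absurd hfinal (not_le.2 this)
  simpa using h2

/-- lattice generated by the columns of a matrix -/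
def LatM {d : ℕ} (B : Matrix (Fin d) (Fin d) ℝ) : Set (Fin d → ℝ) :=
  {v | ∃ x : Fin d → ℤ, v = B.mulVec fun i => (x i : ℝ)}

/-- a system of minimal vectors -/
structure MinSys {d : ℕ} (B : Matrix (Fin d) (Fin d) ℝ) (v : Fin d → Fin d → ℝ) : Prop where
  mem : ∀ i, v i ∈ LatM B
  li : LinearIndependent ℝ v
  mono : Monotone fun j => ‖v j‖
  min : ∀ x ∈ LatM B, ∀ i, ‖x‖ < ‖v i‖ → x ∈ Submodule.span ℝ (v '' Set.Iio i)

lemma exists_sel {d : ℕ} (G : Matrix (Fin d) (Fin d) ℝ) (hG : |G.det| = 1)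
    (V : Submodule ℝ (Fin d → ℝ)) (hV : V ≠ ⊤) :
    ∃ x ∈ LatM G, x ∉ V ∧ ∀ y ∈ LatM G, y ∉ V → ‖x‖ ≤ ‖y‖ := by
  have hu : IsUnit G.det := by
    rw [isUnit_iff_ne_zero]; intro h; simp [h] at hG
  have h1 : ∃ z : Fin d → ℤ, G.mulVec (fun i => (z i : ℝ)) ∉ V := by
    by_contra hcon
    push Not at hcon
    apply hV
    rw [eq_top_iff]
    intro y _
    have e : y = G.mulVec (G⁻¹.mulVec y) := by
      rw [Matrix.mulVec_mulVec, Matrix.mul_nonsing_inv _ hu, Matrix.one_mulVec]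
    rw [e, Matrix.mulVec_eq_sum]
    refine Submodule.sum_mem _ fun j _ => ?_
    have h2 := hcon (Pi.single j 1)
    have e2 : (fun i => ((Pi.single j 1 : Fin d → ℤ) i : ℝ)) = Pi.single j 1 := by
      ext i
      by_cases h : i = j
      · subst h; simp
      · simp [h]
    rw [e2, Matrix.mulVec_single_one] at h2
    rw [op_smul_eq_smul]
    exact V.smul_mem _ h2
  obtain ⟨z0, hz0⟩ := h1
  obtain ⟨z, hz, hmin⟩ := Set.exists_min_image
    ({z : Fin d → ℤ | ‖G.mulVec (fun i => (z i : ℝ))‖ ≤ ‖G.mulVec (fun i => (z0 i : ℝ))‖} ∩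
      {z | G.mulVec (fun i => (z i : ℝ)) ∉ V})
    (fun z => ‖G.mulVec (fun i => (z i : ℝ))‖) ((finite_ball G hG _).inter_of_left _)
    ⟨z0, by simp, hz0⟩
  refine ⟨_, ⟨z, rfl⟩, hz.2, ?_⟩
  rintro _ ⟨y, rfl⟩ hy
  by_cases h : ‖G.mulVec (fun i => (y i : ℝ))‖ ≤ ‖G.mulVec (fun i => (z0 i : ℝ))‖
  · exact hmin y ⟨h, hy⟩
  · exact (show _ ≤ _ from hz.1).trans (not_le.1 h).le

lemma exists_minSys {d : ℕ} (G : Matrix (Fin d) (Fin d) ℝ) (hG : |G.det| = 1) :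
    ∃ v, MinSys G v := by
  classical
  choose! sel hmem hnot hmin using exists_sel G hG
  obtain ⟨V, V0, VS⟩ : ∃ V : ℕ → Submodule ℝ (Fin d → ℝ), V 0 = ⊥ ∧
      ∀ n, V (n + 1) = V n ⊔ Submodule.span ℝ {sel (V n)} :=
    ⟨fun n => Nat.rec ⊥ (fun _ W => W ⊔ Submodule.span ℝ {sel W}) n, rfl, fun _ => rfl⟩
  have hle : ∀ n, Module.finrank ℝ (V n) ≤ n := by
    intro n
    induction n with
    | zero => rw [V0]; simp
    | succ n ih =>
      rw [VS]
      refine (Submodule.finrank_add_le_finrank_add_finrank _ _).trans ?_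
      have : Module.finrank ℝ (Submodule.span ℝ {sel (V n)}) ≤ 1 := by
        simpa using finrank_span_le_card (R := ℝ) ({sel (V n)} : Set (Fin d → ℝ))
      omega
  have hne : ∀ n, n < d → V n ≠ ⊤ := by
    intro n hn h
    have := hle n
    rw [h, finrank_top] at this
    simp at this
    omega
  have hmono : Monotone V := monotone_nat_of_le_succ fun n => by rw [VS]; exact le_sup_left
  have hge : ∀ n, n ≤ d → n ≤ Module.finrank ℝ (V n) := by
    intro n
    induction n with
    | zero => simp
    | succ n ih =>
      intro h
      have h1 := ih (by omega)
      have : V n < V (n + 1) := by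
        refine lt_of_le_of_ne (hmono (by omega)) fun he => hnot _ (hne n (by omega)) ?_
        have : sel (V n) ∈ V (n + 1) := by
          rw [VS]; exact Submodule.mem_sup_right (Submodule.mem_span_singleton_self _)
        rwa [← he] at this
      have := Submodule.finrank_lt_finrank_of_lt this
      omega
  have hspan : ∀ n (hn : n ≤ d), V n = Submodule.span ℝ ((fun i : Fin d => sel (V i)) '' {i | (i : ℕ) < n}) := by
    intro n
    induction n with
    | zero => intro _; rw [V0]; simp
    | succ n ih =>
      intro hn
      have hs : {i : Fin d | (i : ℕ) < n + 1} = {i : Fin d | (i : ℕ) < n} ∪ {⟨n, hn⟩} := by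
        ext i; simp [Fin.ext_iff]; omega
      rw [hs, Set.image_union, Submodule.span_union, ← ih (by omega), VS]
      simp
  refine ⟨fun i => sel (V i), fun i => hmem _ (hne _ i.2), ?_, ?_, ?_⟩
  · apply linearIndependent_of_top_le_span_of_card_eq_finrank
    · have h1 := hspan d le_rfl
      have h2 : {i : Fin d | (i : ℕ) < d} = Set.univ := by ext i; simp
      rw [h2, Set.image_univ] at h1
      rw [← h1]
      refine (Submodule.eq_top_of_finrank_eq (le_antisymm (Submodule.finrank_le _) ?_)).ge
      simpa using hge d le_rfl
    · simp
  · intro i j hij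
    refine hmin _ (hne _ i.2) _ (hmem _ (hne _ j.2)) fun h => hnot _ (hne _ j.2) (hmono ?_ h)
    exact hij
  · intro x hx i hlt
    by_contra hcon
    have h1 := hspan i i.2.le
    have h2 : {j : Fin d | (j : ℕ) < i} = Set.Iio i := by ext j; simp
    rw [h2] at h1
    rw [← h1] at hcon
    exact absurd (hmin _ (hne _ i.2) _ hx hcon) (not_le.2 hlt)

lemma exists_notMem {d m : ℕ} (w : Fin (m + 1) → Fin d → ℝ) (hw : LinearIndependent ℝ w)
    (v : Fin d → Fin d → ℝ) (i : Fin d) (hi : (i : ℕ) = m) :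
    ∃ l, w l ∉ Submodule.span ℝ (v '' Set.Iio i) := by
  classical
  by_contra hcon
  push Not at hcon
  have h1 : Submodule.span ℝ (Set.range w) ≤ Submodule.span ℝ (v '' Set.Iio i) := by
    rw [Submodule.span_le]; rintro _ ⟨l, rfl⟩; exact hcon l
  have h2 := Submodule.finrank_mono h1
  rw [finrank_span_eq_card hw, Fintype.card_fin] at h2
  have h3 : Module.finrank ℝ (Submodule.span ℝ (v '' Set.Iio i)) ≤ i := by
    have : v '' Set.Iio i = (((Finset.Iio i).image v : Finset _) : Set (Fin d → ℝ)) := by simp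
    rw [this]
    refine (finrank_span_finset_le_card _).trans (Finset.card_image_le.trans ?_)
    simp
  omega

lemma MinSys.le_of_li {d m : ℕ} {G : Matrix (Fin d) (Fin d) ℝ} {v : Fin d → Fin d → ℝ}
    (h : MinSys G v) (w : Fin (m + 1) → Fin d → ℝ) (hw : LinearIndependent ℝ w)
    (hm : ∀ l, w l ∈ LatM G) (i : Fin d) (hi : (i : ℕ) = m) : ∃ l, ‖v i‖ ≤ ‖w l‖ := by
  obtain ⟨l, hl⟩ := exists_notMem w hw v i hi
  refine ⟨l, ?_⟩
  by_contra hlt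
  exact hl (h.min _ (hm l) i (not_le.1 hlt))

lemma succMin_eq {d : ℕ} (B : Matrix (Fin d) (Fin d) ℝ) (τ : Fin d → ℝ) (v : Fin d → Fin d → ℝ)
    (h : MinSys (Matrix.diagonal (fun i => Real.exp (-τ i)) * B) v) (i : Fin d) :
    succMin d (LatM B) τ (i + 1) = ‖v i‖ := by
  set D : Matrix (Fin d) (Fin d) ℝ := Matrix.diagonal (fun i => Real.exp (-τ i)) with hD
  set D' : Matrix (Fin d) (Fin d) ℝ := Matrix.diagonal (fun i => Real.exp (τ i)) with hD'
  have h1 : D * D' = 1 := by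
    rw [hD, hD', Matrix.diagonal_mul_diagonal]
    simp [← Real.exp_add]
  have h2 : D' * D = 1 := by
    rw [hD, hD', Matrix.diagonal_mul_diagonal]
    simp [← Real.exp_add]
  have inj : ∀ A A' : Matrix (Fin d) (Fin d) ℝ, A' * A = 1 → LinearMap.ker A.mulVecLin = ⊥ := by
    intro A A' hA
    rw [LinearMap.ker_eq_bot]
    intro x y hxy
    have := congrArg A'.mulVec hxy
    simpa [Matrix.mulVec_mulVec, hA] using this
  apply IsLeast.csInf_eq
  constructor
  · refine ⟨norm_pos_iff.2 (h.li.ne_zero _), fun l => D'.mulVec (v (Fin.castLE i.2 l)), ?_, ?_, ?_⟩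
    · intro l
      obtain ⟨x, hx⟩ := h.mem (Fin.castLE i.2 l)
      refine ⟨x, ?_⟩
      change D'.mulVec (v (Fin.castLE i.2 l)) = _
      rw [hx, Matrix.mulVec_mulVec, ← Matrix.mul_assoc, h2, Matrix.one_mul]
    · exact (h.li.comp _ (Fin.castLE_injective _)).map' D'.mulVecLin (inj _ _ h1)
    · intro l j
      change |D'.mulVec (v (Fin.castLE i.2 l)) j| ≤ _
      rw [hD', Matrix.mulVec_diagonal, abs_mul, abs_of_pos (Real.exp_pos _), mul_comm]
      gcongr
      refine (norm_le_pi_norm (v (Fin.castLE i.2 l)) j).trans (h.mono ?_)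
      rw [Fin.le_def]; simp; omega
  · rintro lam ⟨hpos, w, hw, hli, hb⟩
    have hli' : LinearIndependent ℝ (fun l => D.mulVec (w l)) := hli.map' D.mulVecLin (inj _ _ h2)
    obtain ⟨l, hl⟩ := h.le_of_li _ hli' (fun l => by
      obtain ⟨x, hx⟩ := hw l
      exact ⟨x, by rw [hx, Matrix.mulVec_mulVec]⟩) i rfl
    refine hl.trans ?_
    rw [pi_norm_le_iff_of_nonneg hpos.le]
    intro j
    rw [hD, Matrix.mulVec_diagonal, Real.norm_eq_abs, abs_mul, abs_of_pos (Real.exp_pos _)]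
    calc _ ≤ Real.exp (-τ j) * (lam * Real.exp (τ j)) := by gcongr; exact hb l j
      _ = lam := by rw [mul_left_comm, ← Real.exp_add]; simp

lemma dual_LatM {d : ℕ} (B B' : Matrix (Fin d) (Fin d) ℝ) (hB : B' * B.transpose = 1) :
    dualLattice d (LatM B) = LatM B' := by
  have hB2 : B.transpose * B' = 1 := mul_eq_one_comm.1 hB
  ext w
  constructor
  · intro hw
    have : ∀ j, ∃ c : ℤ, B.transpose.mulVec w j = c := by
      intro j
      obtain ⟨c, hc⟩ := hw (B.mulVec (Pi.single j 1)) ⟨Pi.single j 1, by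
        congr 1; ext i
        by_cases h : i = j
        · subst h; simp
        · simp [h]⟩
      refine ⟨c, ?_⟩
      rw [← hc, Matrix.mulVec_single_one]
      simp [Matrix.mulVec, dotProduct, mul_comm]
    choose c hc using this
    refine ⟨c, ?_⟩
    have : (fun i => (c i : ℝ)) = B.transpose.mulVec w := by ext j; exact (hc j).symm
    rw [this, Matrix.mulVec_mulVec, hB, Matrix.one_mulVec]
  · rintro ⟨c, rfl⟩ _ ⟨x, rfl⟩
    refine ⟨∑ i, c i * x i, ?_⟩
    change (B'.mulVec fun i => (c i : ℝ)) ⬝ᵥ (B.mulVec fun i => (x i : ℝ)) = _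
    rw [Matrix.dotProduct_mulVec, ← Matrix.mulVec_transpose, Matrix.mulVec_mulVec, hB2, Matrix.one_mulVec]
    simp [dotProduct]

lemma det_bound {d : ℕ} (M : Matrix (Fin d) (Fin d) ℝ) :
    |M.det| ≤ (d.factorial : ℝ) * ∏ i, ‖M.row i‖ := by
  rw [Matrix.det_apply']
  refine (Finset.abs_sum_le_sum_abs _ _).trans ?_
  have : ∀ σ ∈ (Finset.univ : Finset (Equiv.Perm (Fin d))),
      |((Equiv.Perm.sign σ : ℤ) : ℝ) * ∏ i, M (σ i) i| ≤ ∏ i, ‖M.row i‖ := by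
    intro σ _
    rw [abs_mul]
    have h1 : |((Equiv.Perm.sign σ : ℤ) : ℝ)| = 1 := by
      rcases Int.units_eq_one_or (Equiv.Perm.sign σ) with h | h <;> simp [h]
    rw [h1, one_mul, Finset.abs_prod, ← Equiv.prod_comp σ (fun i => ‖M.row i‖)]
    refine Finset.prod_le_prod (fun _ _ => abs_nonneg _) fun i _ => ?_
    exact norm_le_pi_norm (M.row (σ i)) i
  refine (Finset.sum_le_card_nsmul _ _ _ this).trans ?_
  simp [Fintype.card_perm]

lemma MinSys.lower {d : ℕ} {G : Matrix (Fin d) (Fin d) ℝ} {v : Fin d → Fin d → ℝ}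
    (hG : |G.det| = 1) (h : MinSys G v) : 1 ≤ (d.factorial : ℝ) * ∏ i, ‖v i‖ := by
  choose z hz using h.mem
  let M : Matrix (Fin d) (Fin d) ℝ := Matrix.of v
  let Z : Matrix (Fin d) (Fin d) ℤ := Matrix.of z
  have hM : M = (Z.map (Int.cast : ℤ → ℝ)) * G.transpose := by
    ext i j
    change v i j = _
    rw [hz i]
    simp [Matrix.mul_apply, Matrix.mulVec, dotProduct, Z, mul_comm]
  have hdet : M.det ≠ 0 := by
    have : LinearIndependent ℝ M.row := h.li
    rw [Matrix.linearIndependent_rows_iff_isUnit, Matrix.isUnit_iff_isUnit_det] at this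
    exact this.ne_zero
  have hZ : (Z.map (Int.cast : ℤ → ℝ)).det = (Z.det : ℝ) := by
    exact (RingHom.map_det (Int.castRingHom ℝ) Z).symm
  have h2 : M.det = Z.det * G.det := by
    rw [hM, Matrix.det_mul, hZ, Matrix.det_transpose]
  have h3 : |M.det| = |(Z.det : ℝ)| := by rw [h2, abs_mul, hG, mul_one]
  have h4 : (1 : ℝ) ≤ |(Z.det : ℝ)| := by
    have : Z.det ≠ 0 := by intro h0; rw [h2, h0] at hdet; simp at hdet
    exact_mod_cast Int.one_le_abs this
  rw [← h3] at h4
  exact h4.trans (det_bound M)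

lemma MinSys.pair_lower {d : ℕ} {G G' : Matrix (Fin d) (Fin d) ℝ} {v w : Fin d → Fin d → ℝ}
    (hGG : G.transpose * G' = 1) (h : MinSys G v) (h' : MinSys G' w) (i i' : Fin d)
    (hi : (i : ℕ) + i' + 1 = d) : 1 ≤ (d : ℝ) * (‖v i‖ * ‖w i'‖) := by
  classical
  let N : Matrix (Fin d) (Fin d) ℝ := Matrix.of v * (Matrix.of w).transpose
  have hN : ∀ a b, N a b = v a ⬝ᵥ w b := fun a b => rfl
  have hdet : N.det ≠ 0 := by
    have h1 : LinearIndependent ℝ (Matrix.of v).row := h.li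
    have h2 : LinearIndependent ℝ (Matrix.of w).row := h'.li
    rw [Matrix.linearIndependent_rows_iff_isUnit, Matrix.isUnit_iff_isUnit_det] at h1 h2
    rw [Matrix.det_mul, Matrix.det_transpose]
    exact mul_ne_zero h1.ne_zero h2.ne_zero
  have hex : ∃ a b, a ≤ i ∧ b ≤ i' ∧ N a b ≠ 0 := by
    by_contra hcon
    push Not at hcon
    apply hdet
    rw [← Matrix.det_transpose, Matrix.det_apply']
    refine Finset.sum_eq_zero fun σ _ => ?_
    have : ∃ a, a ≤ i ∧ σ a ≤ i' := by
      by_contra hc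
      push Not at hc
      have := Finset.card_le_card_of_injOn (s := Finset.Iic i) (t := Finset.Ioi i') σ
        (fun a ha => by simpa using hc a (by simpa using ha)) σ.injective.injOn
      simp at this
      omega
    obtain ⟨a, ha, hb⟩ := this
    rw [Finset.prod_eq_zero (Finset.mem_univ a) (hcon a (σ a) ha hb), mul_zero]
  obtain ⟨a, b, ha, hb, hab⟩ := hex
  obtain ⟨x, hx⟩ := h.mem a
  obtain ⟨y, hy⟩ := h'.mem b
  have hint : N a b = ((∑ i, x i * y i : ℤ) : ℝ) := by
    rw [hN, hx, hy, Matrix.dotProduct_mulVec, ← Matrix.mulVec_transpose, Matrix.mulVec_mulVec]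
    have : G'.transpose * G = 1 := by
      have := congrArg Matrix.transpose hGG
      simpa using this
    rw [this, Matrix.one_mulVec]
    simp [dotProduct]
  have h1 : 1 ≤ |N a b| := by
    rw [hint] at hab ⊢
    exact_mod_cast Int.one_le_abs (by exact_mod_cast hab)
  refine h1.trans ?_
  rw [hN, dotProduct]
  refine (Finset.abs_sum_le_sum_abs _ _).trans ?_
  have : ∀ j ∈ (Finset.univ : Finset (Fin d)), |v a j * w b j| ≤ ‖v i‖ * ‖w i'‖ := by
    intro j _
    rw [abs_mul]
    exact mul_le_mul ((norm_le_pi_norm (v a) j).trans (h.mono ha))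
      ((norm_le_pi_norm (w b) j).trans (h'.mono hb)) (abs_nonneg _) (norm_nonneg _)
  refine (Finset.sum_le_card_nsmul _ _ _ this).trans ?_
  simp

lemma MinSys.pair_upper {d : ℕ} {G G' : Matrix (Fin d) (Fin d) ℝ} {v w : Fin d → Fin d → ℝ}
    (hG : |G.det| = 1)
    (hGG : G.transpose * G' = 1) (h : MinSys G v) (h' : MinSys G' w) (i i' : Fin d)
    (hi : (i : ℕ) + i' + 1 = d) : ‖v i‖ * ‖w i'‖ ≤ (d.factorial : ℝ) := by
  classical
  have hprod : ∏ i, ‖v i‖ ≤ 1 := minkowski2 G hG v h.li h.mono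
    fun x i hx => h.min _ ⟨x, rfl⟩ i hx
  choose z hz using h.mem
  let M : Matrix (Fin d) (Fin d) ℝ := Matrix.of v
  let Z : Matrix (Fin d) (Fin d) ℤ := Matrix.of z
  have hM : M = (Z.map (Int.cast : ℤ → ℝ)) * G.transpose := by
    ext i j
    change v i j = _
    rw [hz i]
    simp [Matrix.mul_apply, Matrix.mulVec, dotProduct, Z, mul_comm]
  have hdet : IsUnit M.det := by
    have : LinearIndependent ℝ M.row := h.li
    rwa [Matrix.linearIndependent_rows_iff_isUnit, Matrix.isUnit_iff_isUnit_det] at this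
  have hli : LinearIndependent ℝ M.adjugate.col := by
    rw [Matrix.linearIndependent_cols_iff_isUnit, Matrix.isUnit_iff_isUnit_det, Matrix.det_adjugate]
    exact hdet.pow _
  have hadjZ : (Z.map (Int.cast : ℤ → ℝ)).adjugate = Z.adjugate.map (Int.cast : ℤ → ℝ) :=
    (RingHom.map_adjugate (Int.castRingHom ℝ) Z).symm
  obtain ⟨ε, hε⟩ : ∃ ε : ℤ, G.det = ε := by
    rcases eq_or_eq_neg_of_abs_eq hG with h | h
    · exact ⟨1, by simp [h]⟩
    · exact ⟨-1, by simp [h]⟩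
  have hadj : M.adjugate = G' * (ε • Z.adjugate).map (Int.cast : ℤ → ℝ) := by
    have h1 : G' * G.transpose = 1 := mul_eq_one_comm.1 hGG
    calc M.adjugate = (G' * G.transpose) * M.adjugate := by rw [h1, Matrix.one_mul]
      _ = G' * ((G.transpose * G.transpose.adjugate) * (Z.map (Int.cast : ℤ → ℝ)).adjugate) := by
          rw [hM, Matrix.adjugate_mul_distrib]; simp only [Matrix.mul_assoc]
      _ = _ := by
          rw [Matrix.mul_adjugate, Matrix.det_transpose, hε, hadjZ, Matrix.smul_mul, Matrix.one_mul]
          congr 1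
          ext a b
          simp only [Matrix.smul_apply, Matrix.map_apply, smul_eq_mul, Int.cast_mul]
  have hmem : ∀ j, M.adjugate.col j ∈ LatM G' := by
    intro j
    refine ⟨fun a => (ε • Z.adjugate) a j, ?_⟩
    ext a
    rw [hadj]
    rfl
  let f : Fin ((i' : ℕ) + 1) → Fin d := fun l => ⟨i + l, by omega⟩
  have hf : Function.Injective f := by
    intro a b hab
    simp only [f, Fin.mk.injEq] at hab
    ext; omega
  obtain ⟨l, hl⟩ := h'.le_of_li (fun l => M.adjugate.col (f l)) (hli.comp f hf)
    (fun l => hmem _) i' rfl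
  have hvi : ‖v i‖ ≤ ‖v (f l)‖ := h.mono (by rw [Fin.le_def]; simp [f])
  have hcol : ‖M.adjugate.col (f l)‖ ≤ (d.factorial : ℝ) * ∏ j ∈ Finset.univ.erase (f l), ‖v j‖ := by
    rw [pi_norm_le_iff_of_nonneg (by positivity)]
    intro a
    change |M.adjugate a (f l)| ≤ _
    rw [Matrix.adjugate_apply]
    refine (det_bound _).trans ?_
    rw [← Finset.mul_prod_erase _ _ (Finset.mem_univ (f l))]
    gcongr ?_ * ?_
    have e1 : ‖(M.updateRow (f l) (Pi.single a 1)).row (f l)‖ ≤ 1 := by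
      rw [Matrix.row, Matrix.updateRow_self, pi_norm_le_iff_of_nonneg zero_le_one]
      intro b
      by_cases hb : b = a
      · subst hb; simp
      · simp [hb]
    have e2 : ∏ j ∈ Finset.univ.erase (f l), ‖(M.updateRow (f l) (Pi.single a 1)).row j‖ =
        ∏ j ∈ Finset.univ.erase (f l), ‖v j‖ := by
      refine Finset.prod_congr rfl fun j hj => ?_
      rw [Matrix.row, Matrix.updateRow_ne (Finset.ne_of_mem_erase hj)]
      rfl
    rw [e2]
    exact mul_le_of_le_one_left (by positivity) e1
  calc ‖v i‖ * ‖w i'‖ ≤ ‖v (f l)‖ * ((d.factorial : ℝ) * ∏ j ∈ Finset.univ.erase (f l), ‖v j‖) := by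
        gcongr; exact hl.trans hcol
    _ = (d.factorial : ℝ) * ∏ j, ‖v j‖ := by
        rw [← Finset.mul_prod_erase _ _ (Finset.mem_univ (f l))]; ring
    _ ≤ (d.factorial : ℝ) * 1 := by gcongr
    _ = _ := mul_one _

theorem stmt6 (d : ℕ) (hd : 2 ≤ d) (Λ : Set (Fin d → ℝ))
    (hΛ : IsUnimodularLattice d Λ) (τ : Fin d → ℝ) (hτ : ∑ i, τ i = 0)
    (k : ℕ) (hk1 : 1 ≤ k) (hkd : k ≤ d - 1) :
    -(k : ℝ) * Real.log d ≤ Sk d Λ τ k - Sk d (dualLattice d Λ) (-τ) (d - k) ∧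
    Sk d Λ τ k - Sk d (dualLattice d Λ) (-τ) (d - k) ≤ ((k : ℝ) + 1) * Real.log (Nat.factorial d) := by
  obtain ⟨B, hB, hΛ⟩ := hΛ
  have hΛ' : Λ = LatM B := hΛ
  have hu : IsUnit B.det := by
    rw [isUnit_iff_ne_zero]; intro h; simp [h] at hB
  have hut : IsUnit B.transpose.det := by rwa [Matrix.det_transpose]
  set B' := B.transpose⁻¹ with hB'
  have hdual : dualLattice d Λ = LatM B' := by
    rw [hΛ']; exact dual_LatM B B' (Matrix.nonsing_inv_mul _ hut)
  set G := Matrix.diagonal (fun i => Real.exp (-τ i)) * B with hGdef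
  set G' := Matrix.diagonal (fun i => Real.exp (-(-τ) i)) * B' with hG'def
  have hGG : G.transpose * G' = 1 := by
    rw [hGdef, hG'def, Matrix.transpose_mul, Matrix.diagonal_transpose, Matrix.mul_assoc,
      ← Matrix.mul_assoc (Matrix.diagonal _) (Matrix.diagonal _), Matrix.diagonal_mul_diagonal]
    have : (fun i => Real.exp (-τ i) * Real.exp (-(-τ) i)) = fun _ => 1 := by
      ext i; rw [← Real.exp_add]; simp
    rw [this, Matrix.diagonal_one, Matrix.one_mul, Matrix.mul_nonsing_inv _ hut]
  have hG : |G.det| = 1 := by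
    rw [hGdef, Matrix.det_mul, Matrix.det_diagonal, ← Real.exp_sum, abs_mul, hB]
    simp [hτ]
  have hG' : |G'.det| = 1 := by
    have := congrArg (fun A => |Matrix.det A|) hGG
    simpa [Matrix.det_mul, abs_mul, hG] using this
  obtain ⟨v, hv⟩ := exists_minSys G hG
  obtain ⟨w, hw⟩ := exists_minSys G' hG'
  have lv : ∀ i : Fin d, Lk d Λ τ (i + 1) = Real.log ‖v i‖ := by
    intro i; rw [Lk, hΛ', succMin_eq B τ v hv i]
  have lw : ∀ i : Fin d, Lk d (dualLattice d Λ) (-τ) (i + 1) = Real.log ‖w i‖ := by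
    intro i; rw [Lk, hdual, succMin_eq B' (-τ) w hw i]
  have pv : ∀ i, 0 < ‖v i‖ := fun i => norm_pos_iff.2 (hv.li.ne_zero _)
  have pw : ∀ i, 0 < ‖w i‖ := fun i => norm_pos_iff.2 (hw.li.ne_zero _)
  have hd0 : (0 : ℝ) < d := by exact_mod_cast (by omega : 0 < d)
  have hf0 : (0 : ℝ) < d.factorial := by exact_mod_cast d.factorial_pos
  set a : ℕ → ℝ := fun n => Lk d Λ τ (n + 1) with ha
  set b : ℕ → ℝ := fun n => Lk d (dualLattice d Λ) (-τ) (n + 1) with hb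
  have hS : ∀ (f : ℕ → ℝ) (m : ℕ), ∑ j ∈ Finset.Icc 1 m, f j = ∑ n ∈ Finset.range m, f (n + 1) := by
    intro f m
    rw [Finset.range_eq_Ico, Finset.sum_Ico_add' f 0 m 1]
    rfl
  have hSa : Sk d Λ τ k = ∑ n ∈ Finset.range k, a n := hS _ _
  have hSb : Sk d (dualLattice d Λ) (-τ) (d - k) = ∑ n ∈ Finset.range (d - k), b n := hS _ _
  have hlow : ∀ n ∈ Finset.range k, -Real.log d ≤ a n + b (d - 1 - n) := by
    intro n hn
    rw [Finset.mem_range] at hn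
    have h1 := hv.pair_lower hGG hw ⟨n, by omega⟩ ⟨d - 1 - n, by omega⟩ (by simp; omega)
    have h2 := Real.log_nonneg h1
    rw [Real.log_mul hd0.ne' (mul_pos (pv _) (pw _)).ne', Real.log_mul (pv _).ne' (pw _).ne',
      ← lv, ← lw] at h2
    simp only [ha, hb]
    linarith
  have hupp : ∀ n ∈ Finset.range k, a n + b (d - 1 - n) ≤ Real.log d.factorial := by
    intro n hn
    rw [Finset.mem_range] at hn
    have h1 := hv.pair_upper hG hGG hw ⟨n, by omega⟩ ⟨d - 1 - n, by omega⟩ (by simp; omega)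
    have h2 := Real.log_le_log (mul_pos (pv _) (pw _)) h1
    rw [Real.log_mul (pv _).ne' (pw _).ne', ← lv, ← lw] at h2
    exact h2
  have hsumb : ∑ n ∈ Finset.range d, b n = Real.log (∏ i, ‖w i‖) := by
    rw [Finset.sum_range, Real.log_prod (fun i _ => (pw i).ne')]
    exact Finset.sum_congr rfl fun i _ => lw i
  have hb1 : ∑ n ∈ Finset.range d, b n ≤ 0 := by
    rw [hsumb]
    exact Real.log_nonpos (Finset.prod_nonneg fun i _ => (pw i).le)
      (minkowski2 G' hG' w hw.li hw.mono fun x i hx => hw.min _ ⟨x, rfl⟩ i hx)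
  have hb2 : -Real.log d.factorial ≤ ∑ n ∈ Finset.range d, b n := by
    have h2 := Real.log_nonneg (hw.lower hG')
    rw [Real.log_mul hf0.ne' (Finset.prod_pos fun i _ => pw i).ne', ← hsumb] at h2
    linarith
  have hsplit : ∑ n ∈ Finset.range d, b n =
      ∑ n ∈ Finset.range (d - k), b n + ∑ n ∈ Finset.range k, b (d - 1 - n) := by
    have e : d = (d - k) + k := by omega
    conv_lhs => rw [e, Finset.sum_range_add]
    congr 1
    rw [← Finset.sum_range_reflect]
    refine Finset.sum_congr rfl fun n hn => ?_
    rw [Finset.mem_range] at hn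
    congr 1; omega
  have h1 := Finset.sum_le_sum hlow
  have h2 := Finset.sum_le_sum hupp
  rw [Finset.sum_add_distrib] at h1 h2
  simp only [Finset.sum_const, Finset.card_range, nsmul_eq_mul] at h1 h2
  rw [hSa, hSb]
  constructor <;> linarith
end
end
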